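/- arXiv:1808.09356 — 3 statements merged into one kernel-verified Lean document; each statement's English description precedes it below -/
import Mathlib

section
/- (Carleman similarity principle, smooth version.) Let ε > 0, let B_ε ⊂ ℂ be the open ball of radius ε centred at 0, let C₁, C₂ : B_ε → ℂ be continuous and bounded, and let v : B_ε → ℂ be continuously differentiable (over ℝ) with ∂̄v(z) + C₁(z)·v(z) + C₂(z)·conj(v(z)) = 0 for all z ∈ B_ε. Then there exist δ ∈ (0, ε], a continuous function Φ : B_δ → ℂ with Φ(z) ≠ 0 for all z ∈ B_δ, and a holomorphic function σ : B_δ → ℂ, such that v(z) = Φ(z)·σ(z) for all z ∈ B_δ. -/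
open Complex Metric

/-- The Cauchy–Riemann operator `∂̄v(z) = (1/2)(∂v/∂x + i ∂v/∂y)`. -/
noncomputable def dbar (v : ℂ → ℂ) (z : ℂ) : ℂ :=
  (1 / 2) * (fderiv ℝ v z 1 + Complex.I * fderiv ℝ v z Complex.I)

open MeasureTheory Filter Topology Set

/-- Regularised Cauchy kernel. -/
noncomputable def csK (z : ℂ) : ℂ := ((1 + ‖z‖ ^ 2)⁻¹ : ℝ) • (starRingEnd ℂ) z

/-- Its dbar derivative. -/
noncomputable def csP (z : ℂ) : ℝ := ((1 + ‖z‖ ^ 2) ^ 2)⁻¹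

/-- Its derivative. -/
noncomputable def csK' (z : ℂ) : ℂ →L[ℝ] ℂ :=
  ((1 + ‖z‖ ^ 2)⁻¹ : ℝ) • (conjCLE : ℂ →L[ℝ] ℂ) +
    ((-((1 + ‖z‖ ^ 2) ^ 2)⁻¹ : ℝ) • (2 • innerSL ℝ z)).smulRight ((starRingEnd ℂ) z)

lemma csK_hasFDerivAt (z : ℂ) : HasFDerivAt csK (csK' z) z := by
  have h1 : HasFDerivAt (fun z : ℂ => 1 + ‖z‖ ^ 2) (2 • innerSL ℝ z) z := by
    simpa using ((hasStrictFDerivAt_norm_sq z).hasFDerivAt.const_add 1)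
  have h2 : HasFDerivAt (fun z : ℂ => (1 + ‖z‖ ^ 2)⁻¹)
      ((-((1 + ‖z‖ ^ 2) ^ 2)⁻¹ : ℝ) • (2 • innerSL ℝ z)) z :=
    (hasDerivAt_inv (by positivity)).comp_hasFDerivAt z h1
  have h3 : HasFDerivAt (fun z : ℂ => (starRingEnd ℂ) z) (conjCLE : ℂ →L[ℝ] ℂ) z :=
    conjCLE.hasFDerivAt
  exact h2.smul h3

lemma csK'_dbar (z : ℂ) : csK' z 1 + I * csK' z I = 2 * (csP z : ℂ) := by
  have hn : ‖z‖ ^ 2 = z.re ^ 2 + z.im ^ 2 := by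
    rw [← Complex.normSq_eq_norm_sq, Complex.normSq_apply]; ring
  have h : (1 + ‖z‖ ^ 2)⁻¹ * (1 + (z.re ^ 2 + z.im ^ 2)) = 1 := by
    rw [hn]
    exact inv_mul_cancel₀ (by positivity)
  simp only [csK', csP, ← inv_pow]
  generalize (1 + ‖z‖ ^ 2)⁻¹ = r at h
  apply Complex.ext
  · simp [Complex.inner, -Complex.ofReal_pow, ← Complex.ofReal_pow]
    linear_combination (-2 * r) * h
  · simp [Complex.inner, -Complex.ofReal_pow, ← Complex.ofReal_pow]
    try ring

lemma csK_continuous : Continuous csK :=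
  continuous_iff_continuousAt.2 fun z => (csK_hasFDerivAt z).continuousAt

lemma csP_continuous : Continuous csP := by
  unfold csP
  exact Continuous.inv₀ (by fun_prop) (fun z => by positivity)

lemma csK'_continuous : Continuous csK' := by
  have h : Continuous fun z : ℂ => (1 + ‖z‖ ^ 2)⁻¹ :=
    Continuous.inv₀ (by fun_prop) (fun z => by positivity)
  have h2 : Continuous fun z : ℂ => ((1 + ‖z‖ ^ 2) ^ 2)⁻¹ :=
    Continuous.inv₀ (by fun_prop) (fun z => by positivity)
  have h3 : Continuous fun z : ℂ => innerSL ℝ z := (innerSL ℝ (E := ℂ)).continuous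
  have h4 : Continuous fun z : ℂ => (-((1 + ‖z‖ ^ 2) ^ 2)⁻¹ : ℝ) • (2 • innerSL ℝ z) :=
    h2.neg.smul (h3.const_smul 2)
  have h5 : Continuous fun z : ℂ =>
     ((-((1 + ‖z‖ ^ 2) ^ 2)⁻¹ : ℝ) • (2 • innerSL ℝ z)).smulRight ((starRingEnd ℂ) z) := by
    have := (ContinuousLinearMap.smulRightL ℝ ℂ ℂ).continuous₂.comp (h4.prodMk Complex.continuous_conj)
    exact this
  exact (h.smul continuous_const).add h5

lemma csK_norm_le (z : ℂ) : ‖csK z‖ ≤ 1 := by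
  rw [csK, norm_smul, Real.norm_of_nonneg (by positivity), RCLike.norm_conj, inv_mul_le_iff₀ (by positivity)]
  nlinarith [sq_nonneg (‖z‖ - 1), norm_nonneg z]

lemma csK'_norm_le (z : ℂ) : ‖csK' z‖ ≤ 3 := by
  have h1 : (1 + ‖z‖ ^ 2)⁻¹ ≤ 1 := inv_le_one_of_one_le₀ (by nlinarith [norm_nonneg z])
  refine ContinuousLinearMap.opNorm_le_bound _ (by norm_num) fun h => ?_
  simp only [csK', add_apply, smul_apply,
    ContinuousLinearMap.smulRight_apply, innerSL_apply_apply]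
  refine (norm_add_le _ _).trans ?_
  have e1 : ‖((1 + ‖z‖ ^ 2)⁻¹ : ℝ) • (conjCLE : ℂ →L[ℝ] ℂ) h‖ ≤ ‖h‖ := by
    rw [norm_smul, Real.norm_of_nonneg (by positivity)]
    have : ‖(conjCLE : ℂ →L[ℝ] ℂ) h‖ = ‖h‖ := by simp
    rw [this]
    exact mul_le_of_le_one_left (norm_nonneg _) h1
  have e2 : ‖(-((1 + ‖z‖ ^ 2) ^ 2)⁻¹ • 2 • inner ℝ z h) • (starRingEnd ℂ) z‖ ≤ 2 * ‖h‖ := by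
    rw [norm_smul, norm_smul, norm_neg, Real.norm_of_nonneg (by positivity), RCLike.norm_conj,
      mul_assoc, inv_mul_le_iff₀ (by positivity)]
    have : ‖2 • inner ℝ z h‖ ≤ 2 * (‖z‖ * ‖h‖) := by
      rw [nsmul_eq_mul, norm_mul]
      simpa using norm_inner_le_norm (𝕜 := ℝ) z h
    calc _ ≤ 2 * (‖z‖ * ‖h‖) * ‖z‖ := by gcongr
      _ = ‖z‖^2 * (2 * ‖h‖) := by ring
      _ ≤ _ := by
        gcongr
        nlinarith [sq_nonneg (‖z‖^2), norm_nonneg z, sq_nonneg ‖z‖]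
  linarith

/-- comparison with the Cauchy kernel -/
noncomputable def csE (z : ℂ) : ℝ := (‖z‖ * (1 + ‖z‖ ^ 2))⁻¹

lemma csK_sub (z : ℂ) : ‖csK z - z⁻¹‖ = csE z := by
  by_cases hz : z = 0
  · simp [hz, csK, csE]
  have h : (1 + ‖z‖ ^ 2) ≠ 0 := by positivity
  have hc : (1 + (‖z‖:ℂ) ^ 2) ≠ 0 := by exact_mod_cast h
  have : csK z - z⁻¹ = - ((((1 + ‖z‖ ^ 2)⁻¹ : ℝ) : ℂ) * z⁻¹) := by
    rw [csK, Complex.real_smul]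
    push_cast
    field_simp
    rw [Complex.conj_mul']
    ring
  rw [this, norm_neg, norm_mul, Complex.norm_real, Real.norm_of_nonneg (by positivity), csE, mul_inv,
    norm_inv]
  ring

lemma csE_integrable : Integrable csE := by
  have := (integrable_fun_norm_addHaar (volume : Measure ℂ) (f := fun r : ℝ => (r * (1 + r^2))⁻¹)).2 ?_
  · exact this
  · rw [Complex.finrank_real_complex]
    have h : IntegrableOn (fun r : ℝ => (1 + r^2)⁻¹) (Ioi 0) := integrable_inv_one_add_sq.integrableOn
    refine h.congr_fun (fun r hr => ?_) measurableSet_Ioi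
    have : (0:ℝ) < r := hr
    simp
    field_simp

lemma csP_integrable : Integrable csP := by
  have := (integrable_fun_norm_addHaar (volume : Measure ℂ) (f := fun r : ℝ => ((1 + r^2)^2)⁻¹)).2 ?_
  · exact this
  · rw [Complex.finrank_real_complex]
    have h : IntegrableOn (fun r : ℝ => (1 + r^2)⁻¹) (Ioi 0) := integrable_inv_one_add_sq.integrableOn
    refine Integrable.mono' h ?_ ?_
    · refine Continuous.aestronglyMeasurable ?_
      have h2 : Continuous fun r : ℝ => ((1 + r ^ 2) ^ 2)⁻¹ :=
        Continuous.inv₀ (by fun_prop) (fun z => by positivity)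
      exact (continuous_pow _).smul h2
    · filter_upwards [ae_restrict_mem measurableSet_Ioi] with r hr
      have : (0:ℝ) < r := hr
      rw [Real.norm_of_nonneg (by simp; positivity)]
      simp
      field_simp
      nlinarith [sq_nonneg (r-1)]

lemma csP_integral_pos : 0 < ∫ z, csP z := by
  refine (integral_pos_iff_support_of_nonneg (fun z => by unfold csP; positivity) csP_integrable).2 ?_
  have : Function.support csP = univ := by
    ext z
    simp only [Function.mem_support, mem_univ, iff_true, csP]
    positivity
  rw [this]
  simp

/-- Regularised Cauchy transform. -/
noncomputable def csW (A : ℂ → ℂ) (c : ℝ) (z : ℂ) : ℂ := ∫ ζ, (c • csK (c • (z - ζ))) * A ζ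

/-- Cauchy transform. -/
noncomputable def csV (A : ℂ → ℂ) (z : ℂ) : ℂ := ∫ ζ, (z - ζ)⁻¹ * A ζ

/-- Mollification. -/
noncomputable def csD (A : ℂ → ℂ) (c : ℝ) (z : ℂ) : ℂ := ∫ ζ, (c ^ 2 * csP (c • (z - ζ))) • A ζ

/-- The derivative of the integrand. -/
noncomputable def csF' (A : ℂ → ℂ) (c : ℝ) (z ζ : ℂ) : ℂ →L[ℝ] ℂ :=
  (c ^ 2) • ((ContinuousLinearMap.mul ℝ ℂ (A ζ)).comp (csK' (c • (z - ζ))))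

lemma csW_integrable {A : ℂ → ℂ} (hA : Integrable A) (c : ℝ) (z : ℂ) :
    Integrable (fun ζ => (c • csK (c • (z - ζ))) * A ζ) := by
  refine Integrable.bdd_mul (c := |c|) hA ?_ (ae_of_all _ fun ζ => ?_)
  · have := csK_continuous
    exact Continuous.aestronglyMeasurable (by fun_prop)
  · rw [norm_smul, Real.norm_eq_abs]
    exact mul_le_of_le_one_right (abs_nonneg _) (csK_norm_le _)

lemma csF'_norm_le (A : ℂ → ℂ) (c : ℝ) (z ζ : ℂ) : ‖csF' A c z ζ‖ ≤ c ^ 2 * 3 * ‖A ζ‖ := by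
  rw [csF', norm_smul, Real.norm_of_nonneg (by positivity), mul_assoc]
  gcongr
  refine (ContinuousLinearMap.opNorm_comp_le _ _).trans ?_
  rw [mul_comm]
  gcongr
  · exact csK'_norm_le _
  · exact ContinuousLinearMap.opNorm_mul_apply_le ℝ ℂ _

lemma csF'_aesm {A : ℂ → ℂ} (hA : Integrable A) (c : ℝ) (z : ℂ) :
    AEStronglyMeasurable (csF' A c z) volume := by
  have h1 : AEStronglyMeasurable (fun ζ => ContinuousLinearMap.mul ℝ ℂ (A ζ)) volume :=
    (ContinuousLinearMap.mul ℝ ℂ).continuous.comp_aestronglyMeasurable hA.1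
  have h2 : AEStronglyMeasurable (fun ζ => csK' (c • (z - ζ))) volume := by
    have := csK'_continuous
    exact Continuous.aestronglyMeasurable (by fun_prop)
  have h3 := (ContinuousLinearMap.compL ℝ ℂ ℂ ℂ).aestronglyMeasurable_comp₂ h1 h2
  exact h3.const_smul (c ^ 2)

lemma csF'_integrable {A : ℂ → ℂ} (hA : Integrable A) (c : ℝ) (z : ℂ) :
    Integrable (csF' A c z) :=
  (hA.norm.const_mul (c ^ 2 * 3)).mono' (csF'_aesm hA c z) (ae_of_all _ fun ζ => csF'_norm_le A c z ζ)

lemma csW_hasFDerivAt {A : ℂ → ℂ} (hA : Integrable A) (c : ℝ) (z : ℂ) :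
    HasFDerivAt (csW A c) (∫ ζ, csF' A c z ζ) z := by
  refine hasFDerivAt_integral_of_dominated_of_fderiv_le (bound := fun ζ => c ^ 2 * 3 * ‖A ζ‖)
    (s := univ) univ_mem (Eventually.of_forall fun u => (csW_integrable hA c u).1)
    (csW_integrable hA c z) (csF'_aesm hA c z)
    (ae_of_all _ fun ζ u _ => csF'_norm_le A c u ζ) (hA.norm.const_mul _)
    (ae_of_all _ fun ζ u _ => ?_)
  have h1 : HasFDerivAt (fun x : ℂ => c • (x - ζ)) (c • ContinuousLinearMap.id ℝ ℂ) u :=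
    ((hasFDerivAt_id u).sub_const ζ).const_smul c
  have h2 := ((csK_hasFDerivAt (c • (u - ζ))).comp u h1).const_smul c
  have h3 := h2.mul_const (A ζ)
  refine h3.congr_fderiv ?_
  ext h
  simp [csF']
  ring

lemma csP_nonneg (z : ℂ) : 0 ≤ csP z := by unfold csP; positivity
lemma csP_le (z : ℂ) : csP z ≤ 1 := by
  unfold csP
  exact inv_le_one_of_one_le₀ (by nlinarith [sq_nonneg ‖z‖, sq_nonneg (‖z‖ ^ 2)])

lemma csW_dbar {A : ℂ → ℂ} (hA : Integrable A) (c : ℝ) (z : ℂ) :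
    dbar (csW A c) z = csD A c z := by
  have hi := csF'_integrable hA c z
  rw [dbar, (csW_hasFDerivAt hA c z).fderiv, ContinuousLinearMap.integral_apply hi,
    ContinuousLinearMap.integral_apply hi, ← integral_const_mul, ← integral_add, ← integral_const_mul,
    csD]
  · congr 1
    ext1 ζ
    have := csK'_dbar (c • (z - ζ))
    simp only [csF', smul_apply, ContinuousLinearMap.comp_apply,
      ContinuousLinearMap.mul_apply', Complex.real_smul]
    push_cast
    linear_combination (1 / 2 * c ^ 2 * A ζ) * this
  · exact hi.apply_continuousLinearMap 1
  · exact (hi.apply_continuousLinearMap I).const_mul I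

lemma csD_continuous {A : ℂ → ℂ} (hA : Integrable A) (c : ℝ) : Continuous (csD A c) := by
  have hP := csP_continuous
  refine continuous_of_dominated (bound := fun ζ => c ^ 2 * ‖A ζ‖) (fun z => ?_)
    (fun z => ae_of_all _ fun ζ => ?_) (hA.norm.const_mul _) (ae_of_all _ fun ζ => ?_)
  · have h : AEStronglyMeasurable (fun ζ => c ^ 2 * csP (c • (z - ζ))) volume :=
      Continuous.aestronglyMeasurable (by fun_prop)
    exact h.smul hA.1
  · rw [norm_smul, Real.norm_of_nonneg (mul_nonneg (sq_nonneg _) (csP_nonneg _))]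
    gcongr
    exact mul_le_of_le_one_right (sq_nonneg _) (csP_le _)
  · fun_prop

lemma cs_scale (f : ℂ → ℝ) (c : ℝ) (z : ℂ) :
    ∫ ζ, f (c • (z - ζ)) = (c ^ 2)⁻¹ * ∫ ζ, f ζ := by
  rw [integral_sub_left_eq_self (fun ζ => f (c • ζ)) volume z, Measure.integral_comp_smul,
    Complex.finrank_real_complex, abs_of_nonneg (by positivity), smul_eq_mul]

lemma cs_scale_int {f : ℂ → ℝ} (hf : Integrable f) {c : ℝ} (hc : 0 < c) (z : ℂ) :
    Integrable fun ζ => f (c • (z - ζ)) :=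
  ((hf.comp_smul hc.ne').comp_sub_left z)

lemma csD_norm_le {A : ℂ → ℂ} {M : ℝ} (hM : ∀ z, ‖A z‖ ≤ M) {c : ℝ} (hc : 0 < c)
    (z : ℂ) : ‖csD A c z‖ ≤ M * ∫ ζ, csP ζ := by
  have h : ‖csD A c z‖ ≤ ∫ ζ, c ^ 2 * csP (c • (z - ζ)) * M := by
    refine norm_integral_le_of_norm_le
      (((cs_scale_int csP_integrable hc z).const_mul _).mul_const M) (ae_of_all _ fun ζ => ?_)
    have hp := mul_nonneg (sq_nonneg c) (csP_nonneg (c • (z - ζ)))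
    rw [norm_smul, Real.norm_of_nonneg hp]
    exact mul_le_mul_of_nonneg_left (hM ζ) hp
  refine h.trans_eq ?_
  rw [integral_mul_const, integral_const_mul, cs_scale]
  field_simp

lemma csD_tendsto {A : ℂ → ℂ} (hA : Integrable A) {z : ℂ} (hz : ContinuousAt A z) :
    Tendsto (fun c => csD A c z) atTop (𝓝 ((∫ ζ, csP ζ) • A z)) := by
  set C := ∫ ζ, csP ζ with hC
  have hC0 : 0 < C := csP_integral_pos
  have := tendsto_integral_comp_smul_smul_of_integrable' (μ := (volume : Measure ℂ))
    (φ := fun z => C⁻¹ * csP z) (fun z => mul_nonneg (by positivity) (csP_nonneg z))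
    (by rw [integral_const_mul, ← hC]; field_simp) ?_ hA hz
  · refine (this.const_smul C).congr fun c => ?_
    rw [csD, ← integral_smul]
    congr 1
    ext1 ζ
    rw [smul_smul, Complex.finrank_real_complex]
    congr 1
    field_simp
  · rw [Complex.finrank_real_complex]
    have h1 : Tendsto (fun x : ℂ => C⁻¹ * (‖x‖ ^ 2)⁻¹) (Bornology.cobounded ℂ) (𝓝 0) := by
      have : Tendsto (fun x : ℂ => (‖x‖ ^ 2)⁻¹) (Bornology.cobounded ℂ) (𝓝 0) :=
        tendsto_inv_atTop_zero.comp
          ((tendsto_pow_atTop two_ne_zero).comp tendsto_norm_cobounded_atTop)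
      simpa using this.const_mul C⁻¹
    refine squeeze_zero (fun x => by have := csP_nonneg x; positivity) (fun x => ?_) h1
    rw [mul_left_comm]
    gcongr
    unfold csP
    rcases eq_or_ne x 0 with rfl | hx
    · simp
    have : 0 < ‖x‖ := norm_pos_iff.2 hx
    rw [← div_eq_mul_inv, div_le_iff₀ (by positivity), inv_mul_eq_div, le_div_iff₀ (by positivity)]
    nlinarith [sq_nonneg ‖x‖]

lemma cs_kernel_diff {c : ℝ} (hc : 0 < c) (u : ℂ) : ‖c • csK (c • u) - u⁻¹‖ = c * csE (c • u) := by
  have : c • csK (c • u) - u⁻¹ = c • (csK (c • u) - (c • u)⁻¹) := by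
    have hc' : (c : ℂ) ≠ 0 := by exact_mod_cast hc.ne'
    simp only [Complex.real_smul, mul_inv, mul_sub]
    rw [mul_inv_cancel_left₀ hc']
  rw [this, norm_smul, Real.norm_of_nonneg hc.le, csK_sub]

lemma csE_nonneg (z : ℂ) : 0 ≤ csE z := by unfold csE; positivity

lemma cs_diff_integrable {A : ℂ → ℂ} (hA : Integrable A) {M : ℝ} (hM : ∀ z, ‖A z‖ ≤ M) {c : ℝ}
    (hc : 0 < c) (z : ℂ) :
    Integrable (fun ζ => (c • csK (c • (z - ζ)) - (z - ζ)⁻¹) * A ζ) := by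
  refine Integrable.mul_bdd (c := M) ?_ hA.1 (ae_of_all _ hM)
  refine ((cs_scale_int csE_integrable hc z).const_mul c).mono' ?_ (ae_of_all _ fun ζ => ?_)
  · have h := csK_continuous
    have h1 : Measurable fun ζ => c • csK (c • (z - ζ)) := Continuous.measurable (by fun_prop)
    have h2 : Measurable fun ζ : ℂ => (z - ζ)⁻¹ := (measurable_const.sub measurable_id).inv
    exact (h1.sub h2).aestronglyMeasurable
  · exact (cs_kernel_diff hc _).le

lemma cs_diff_le {A : ℂ → ℂ} (hA : Integrable A) {M : ℝ} (hM : ∀ z, ‖A z‖ ≤ M) {c : ℝ}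
    (hc : 0 < c) (z : ℂ) : ‖csW A c z - csV A z‖ ≤ c⁻¹ * (M * ∫ ζ, csE ζ) := by
  have hd := cs_diff_integrable hA hM hc z
  have hv : Integrable (fun ζ => (z - ζ)⁻¹ * A ζ) := by
    refine ((csW_integrable hA c z).sub hd).congr (ae_of_all _ fun ζ => ?_)
    simp only [Pi.sub_apply]
    ring
  rw [csW, csV, ← integral_sub (csW_integrable hA c z) hv]
  have h : ‖∫ ζ, ((c • csK (c • (z - ζ))) * A ζ - (z - ζ)⁻¹ * A ζ)‖ ≤
      ∫ ζ, c * csE (c • (z - ζ)) * M := by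
    refine norm_integral_le_of_norm_le
      (((cs_scale_int csE_integrable hc z).const_mul _).mul_const M) (ae_of_all _ fun ζ => ?_)
    rw [← sub_mul, norm_mul, cs_kernel_diff hc]
    exact mul_le_mul_of_nonneg_left (hM ζ) (mul_nonneg hc.le (csE_nonneg _))
  refine h.trans_eq ?_
  rw [integral_mul_const, integral_const_mul, cs_scale]
  field_simp

lemma cs_unif {A : ℂ → ℂ} (hA : Integrable A) {M : ℝ} (hM : ∀ z, ‖A z‖ ≤ M) :
    TendstoUniformly (csW A) (csV A) atTop := by
  rw [Metric.tendstoUniformly_iff]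
  intro e he
  have : Tendsto (fun c : ℝ => c⁻¹ * (M * ∫ ζ, csE ζ)) atTop (𝓝 0) := by
    simpa using tendsto_inv_atTop_zero.mul_const (M * ∫ ζ, csE ζ)
  filter_upwards [this.eventually_lt_const he, eventually_gt_atTop 0] with c hc hc0 z
  rw [dist_comm, dist_eq_norm]
  exact (cs_diff_le hA hM hc0 z).trans_lt hc

lemma csV_continuous {A : ℂ → ℂ} (hA : Integrable A) {M : ℝ} (hM : ∀ z, ‖A z‖ ≤ M) :
    Continuous (csV A) :=
  (cs_unif hA hM).continuous (Frequently.of_forall fun c =>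
    continuous_iff_continuousAt.2 fun z => (csW_hasFDerivAt hA c z).continuousAt)

/-- A Morera-type approximation lemma. -/
lemma cs_morera (ε : ℝ) (f : ℂ → ℂ) (F : ℝ → ℂ → ℂ)
    (hf : ContinuousOn f (ball (0 : ℂ) ε))
    (hd : ∀ c, 0 < c → ∀ z ∈ ball (0 : ℂ) ε, DifferentiableAt ℝ (F c) z)
    (hc : ∀ c, 0 < c → ContinuousOn (dbar (F c)) (ball (0 : ℂ) ε))
    (hb : ∀ S ⊆ ball (0 : ℂ) ε, IsCompact S →
      ∃ B, ∀ c, 1 ≤ c → ∀ z ∈ S, ‖F c z‖ ≤ B ∧ ‖dbar (F c) z‖ ≤ B)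
    (hl : ∀ z ∈ ball (0 : ℂ) ε, Tendsto (fun c => F c z) atTop (𝓝 (f z)))
    (hl' : ∀ z ∈ ball (0 : ℂ) ε, Tendsto (fun c => dbar (F c) z) atTop (𝓝 0)) :
    DifferentiableOn ℂ f (ball (0 : ℂ) ε) := by
  refine IsExactOn.differentiableOn isOpen_ball (IsConservativeOn.isExactOn_ball hf ?_)
  intro z w hzw
  rw [← add_eq_zero_iff_eq_neg, wedgeIntegral_add_wedgeIntegral_eq]
  have hcpt : IsCompact (Rectangle z w) := isCompact_uIcc.reProdIm isCompact_uIcc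
  obtain ⟨B, hB⟩ := hb _ hzw hcpt
  have hmem : ∀ x ∈ uIcc z.re w.re, ∀ y ∈ uIcc z.im w.im, (x + y * I : ℂ) ∈ Rectangle z w := by
    intro x hx y hy
    simpa [Rectangle, mem_reProdIm] using And.intro hx hy
  have key : ∀ c : ℝ, 1 ≤ c → (∫ x : ℝ in z.re..w.re, F c (x + z.im * I)) -
      (∫ x : ℝ in z.re..w.re, F c (x + w.im * I)) +
      I • (∫ y : ℝ in z.im..w.im, F c (re w + y * I)) -
      I • (∫ y : ℝ in z.im..w.im, F c (re z + y * I)) =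
      ∫ x : ℝ in z.re..w.re, ∫ y : ℝ in z.im..w.im,
        (ball (0 : ℂ) ε).indicator (fun z => 2 * I * dbar (F c) z) (x + y * I) := by
    intro c hc1
    have hc0 : 0 < c := by linarith
    have e : ∀ u, I • fderiv ℝ (F c) u 1 - fderiv ℝ (F c) u I = 2 * I * dbar (F c) u := by
      intro u
      simp only [dbar, smul_eq_mul]
      linear_combination (- fderiv ℝ (F c) u I) * I_mul_I
    rw [integral_boundary_rect_of_differentiableOn_real (F c) z w
      (fun u hu => (hd c hc0 u (hzw hu)).differentiableWithinAt)]
    · refine intervalIntegral.integral_congr fun x hx => ?_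
      refine intervalIntegral.integral_congr fun y hy => ?_
      simp only [e]
      rw [indicator_of_mem (hzw (hmem x hx y hy))]
    · simp only [e]
      exact (((hc c hc0).mono hzw).const_mul _ |>.integrableOn_compact hcpt)
  have segx : ∀ y ∈ uIcc z.im w.im, Tendsto (fun c => ∫ x : ℝ in z.re..w.re, F c (x + y * I)) atTop
      (𝓝 (∫ x : ℝ in z.re..w.re, f (x + y * I))) := by
    intro y hy
    refine intervalIntegral.tendsto_integral_filter_of_dominated_convergence (fun _ => B) ?_ ?_ ?_ ?_
    · filter_upwards [eventually_ge_atTop 1] with c hc1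
      have : ContinuousOn (fun x : ℝ => F c (x + y * I)) (uIcc z.re w.re) := by
        refine ContinuousOn.comp (t := Rectangle z w)
          (fun u hu => (hd c (by linarith) u (hzw hu)).continuousAt.continuousWithinAt) (by fun_prop)
          (fun x hx => hmem x hx y hy)
      exact (this.mono uIoc_subset_uIcc).aestronglyMeasurable measurableSet_uIoc
    · filter_upwards [eventually_ge_atTop 1] with c hc1
      exact ae_of_all _ fun x hx => (hB c hc1 _ (hmem x (uIoc_subset_uIcc hx) y hy)).1
    · exact intervalIntegrable_const
    · exact ae_of_all _ fun x hx => hl _ (hzw (hmem x (uIoc_subset_uIcc hx) y hy))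
  have segy : ∀ x ∈ uIcc z.re w.re, Tendsto (fun c => ∫ y : ℝ in z.im..w.im, F c (x + y * I)) atTop
      (𝓝 (∫ y : ℝ in z.im..w.im, f (x + y * I))) := by
    intro x hx
    refine intervalIntegral.tendsto_integral_filter_of_dominated_convergence (fun _ => B) ?_ ?_ ?_ ?_
    · filter_upwards [eventually_ge_atTop 1] with c hc1
      have : ContinuousOn (fun y : ℝ => F c (x + y * I)) (uIcc z.im w.im) := by
        refine ContinuousOn.comp (t := Rectangle z w)
          (fun u hu => (hd c (by linarith) u (hzw hu)).continuousAt.continuousWithinAt) (by fun_prop)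
          (fun y hy => hmem x hx y hy)
      exact (this.mono uIoc_subset_uIcc).aestronglyMeasurable measurableSet_uIoc
    · filter_upwards [eventually_ge_atTop 1] with c hc1
      exact ae_of_all _ fun y hy => (hB c hc1 _ (hmem x hx y (uIoc_subset_uIcc hy))).1
    · exact intervalIntegrable_const
    · exact ae_of_all _ fun y hy => hl _ (hzw (hmem x hx y (uIoc_subset_uIcc hy)))
  have lim1 := (((segx z.im left_mem_uIcc).sub (segx w.im right_mem_uIcc)).add
    ((segy w.re right_mem_uIcc).const_smul I)).sub ((segy z.re left_mem_uIcc).const_smul I)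
  have meas : ∀ c : ℝ, 0 < c → StronglyMeasurable (fun p : ℝ × ℝ =>
      (ball (0 : ℂ) ε).indicator (fun z => 2 * I * dbar (F c) z) (p.1 + p.2 * I)) := by
    intro c hc0
    have h1 : Measurable ((ball (0 : ℂ) ε).indicator (fun z => 2 * I * dbar (F c) z)) := by
      classical
      have := ((hc c hc0).const_mul (2 * I)).measurable_piecewise
        (continuousOn_const (c := (0:ℂ)) (s := (ball (0 : ℂ) ε)ᶜ)) isOpen_ball.measurableSet
      rw [← piecewise_eq_indicator]
      exact this
    exact (h1.comp (by fun_prop : Measurable fun p : ℝ × ℝ => (p.1 + p.2 * I : ℂ))).stronglyMeasurable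
  have hbd : ∀ c : ℝ, 1 ≤ c → ∀ x ∈ uIcc z.re w.re, ∀ y ∈ uIcc z.im w.im,
      ‖(ball (0 : ℂ) ε).indicator (fun z => 2 * I * dbar (F c) z) (x + y * I)‖ ≤ 2 * B := by
    intro c hc1 x hx y hy
    rw [indicator_of_mem (hzw (hmem x hx y hy))]
    simpa using (hB c hc1 _ (hmem x hx y hy)).2
  have lim2 : Tendsto (fun c => ∫ x : ℝ in z.re..w.re, ∫ y : ℝ in z.im..w.im,
        (ball (0 : ℂ) ε).indicator (fun z => 2 * I * dbar (F c) z) (x + y * I)) atTop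
      (𝓝 (∫ x : ℝ in z.re..w.re, ∫ y : ℝ in z.im..w.im, (0 : ℂ))) := by
    refine intervalIntegral.tendsto_integral_filter_of_dominated_convergence
      (fun _ => 2 * B * |w.im - z.im|) ?_ ?_ ?_ ?_
    · filter_upwards [eventually_ge_atTop 1] with c hc1
      have h := meas c (by linarith)
      refine StronglyMeasurable.aestronglyMeasurable ?_
      simp only [intervalIntegral]
      exact (StronglyMeasurable.integral_prod_right' h).sub (StronglyMeasurable.integral_prod_right' h)
    · filter_upwards [eventually_ge_atTop 1] with c hc1
      exact ae_of_all _ fun x hx => intervalIntegral.norm_integral_le_of_norm_le_const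
        fun y hy => hbd c hc1 x (uIoc_subset_uIcc hx) y (uIoc_subset_uIcc hy)
    · exact intervalIntegrable_const
    · refine ae_of_all _ fun x hx => ?_
      refine intervalIntegral.tendsto_integral_filter_of_dominated_convergence
        (fun _ => 2 * B) ?_ ?_ ?_ ?_
      · filter_upwards [eventually_ge_atTop 1] with c hc1
        exact ((meas c (by linarith)).comp_measurable measurable_prodMk_left).aestronglyMeasurable
      · filter_upwards [eventually_ge_atTop 1] with c hc1
        exact ae_of_all _ fun y hy => hbd c hc1 x (uIoc_subset_uIcc hx) y (uIoc_subset_uIcc hy)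
      · exact intervalIntegrable_const
      · refine ae_of_all _ fun y hy => ?_
        have hm := hzw (hmem x (uIoc_subset_uIcc hx) y (uIoc_subset_uIcc hy))
        simp only [indicator_of_mem hm]
        simpa using (hl' _ hm).const_mul (2 * I)
  simp only [intervalIntegral.integral_zero] at lim2
  refine tendsto_nhds_unique lim1 (lim2.congr' ?_)
  filter_upwards [eventually_ge_atTop 1] with c hc1
  exact (key c hc1).symm

/-- Carleman similarity principle (smooth version). -/
theorem carleman_similarity_principle
    (ε : ℝ) (hε : 0 < ε)
    (C₁ C₂ : ℂ → ℂ)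
    (hC₁cont : ContinuousOn C₁ (ball (0 : ℂ) ε))
    (hC₂cont : ContinuousOn C₂ (ball (0 : ℂ) ε))
    (hC₁bdd : ∃ M : ℝ, ∀ z ∈ ball (0 : ℂ) ε, ‖C₁ z‖ ≤ M)
    (hC₂bdd : ∃ M : ℝ, ∀ z ∈ ball (0 : ℂ) ε, ‖C₂ z‖ ≤ M)
    (v : ℂ → ℂ) (hv : ContDiffOn ℝ 1 v (ball (0 : ℂ) ε))
    (heq : ∀ z ∈ ball (0 : ℂ) ε,
      dbar v z + C₁ z * v z + C₂ z * (starRingEnd ℂ) (v z) = 0) :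
    ∃ δ : ℝ, 0 < δ ∧ δ ≤ ε ∧
      ∃ (Φ σ : ℂ → ℂ),
        ContinuousOn Φ (ball (0 : ℂ) δ) ∧
        (∀ z ∈ ball (0 : ℂ) δ, Φ z ≠ 0) ∧
        DifferentiableOn ℂ σ (ball (0 : ℂ) δ) ∧
        ∀ z ∈ ball (0 : ℂ) δ, v z = Φ z * σ z := by
  classical
  obtain ⟨M₁, hM₁⟩ := hC₁bdd
  obtain ⟨M₂, hM₂⟩ := hC₂bdd
  have h0 : (0 : ℂ) ∈ ball (0 : ℂ) ε := mem_ball_self hε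
  have hM₁0 : 0 ≤ M₁ := (norm_nonneg _).trans (hM₁ 0 h0)
  have hM₂0 : 0 ≤ M₂ := (norm_nonneg _).trans (hM₂ 0 h0)
  set A : ℂ → ℂ := (ball (0 : ℂ) ε).indicator
    (fun z => C₁ z + C₂ z * ((starRingEnd ℂ) (v z) / v z)) with hAdef
  have hAin : ∀ z ∈ ball (0 : ℂ) ε, A z = C₁ z + C₂ z * ((starRingEnd ℂ) (v z) / v z) :=
    fun z hz => indicator_of_mem hz _
  have hM : ∀ z, ‖A z‖ ≤ M₁ + M₂ := by
    intro z
    by_cases hz : z ∈ ball (0 : ℂ) ε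
    · rw [hAin z hz]
      refine (norm_add_le _ _).trans (add_le_add (hM₁ z hz) ?_)
      rw [norm_mul, norm_div, RCLike.norm_conj]
      calc _ ≤ M₂ * 1 := mul_le_mul (hM₂ z hz) (div_self_le_one _) (by positivity) hM₂0
        _ = M₂ := mul_one _
    · rw [hAdef, indicator_of_notMem hz]
      simpa using add_nonneg hM₁0 hM₂0
  have hind : ∀ g : ℂ → ℂ, ContinuousOn g (ball (0 : ℂ) ε) →
      AEMeasurable g (volume.restrict (ball (0 : ℂ) ε)) :=
    fun g hg => hg.aemeasurable measurableSet_ball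
  have hvc : ContinuousOn v (ball (0 : ℂ) ε) := hv.continuousOn
  have hA : Integrable A := by
    rw [hAdef, integrable_indicator_iff measurableSet_ball]
    have hvm := hind v hvc
    have hm : AEMeasurable (fun z => C₁ z + C₂ z * ((starRingEnd ℂ) (v z) / v z))
        (volume.restrict (ball (0 : ℂ) ε)) :=
      (hind _ hC₁cont).add ((hind _ hC₂cont).mul
        ((Complex.continuous_conj.measurable.comp_aemeasurable hvm).div hvm))
    have hfin : IntegrableOn (fun _ : ℂ => M₁ + M₂) (ball (0 : ℂ) ε) :=
      integrableOn_const measure_ball_lt_top.ne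
    refine Integrable.mono' hfin hm.aestronglyMeasurable ?_
    filter_upwards [ae_restrict_mem measurableSet_ball] with z hz
    rw [← hAin z hz]
    exact hM z
  have hAc : ∀ z ∈ ball (0 : ℂ) ε, v z ≠ 0 → ContinuousAt A z := by
    intro z hz hvz
    have hn : ball (0 : ℂ) ε ∈ 𝓝 z := isOpen_ball.mem_nhds hz
    have hvz' := hvc.continuousAt hn
    have h1 : ContinuousAt (fun z => C₁ z + C₂ z * ((starRingEnd ℂ) (v z) / v z)) z :=
      (hC₁cont.continuousAt hn).add ((hC₂cont.continuousAt hn).mul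
        ((Complex.continuous_conj.continuousAt.comp hvz').div hvz' hvz))
    refine h1.congr ?_
    filter_upwards [hn] with u hu using (hAin u hu).symm
  have hdv : ∀ z ∈ ball (0 : ℂ) ε, dbar v z = - (A z * v z) := by
    intro z hz
    have h := heq z hz
    rw [hAin z hz]
    by_cases hvz : v z = 0
    · rw [hvz] at h ⊢
      simpa using h
    · field_simp
      linear_combination h
  set C : ℝ := ∫ ζ, csP ζ with hC
  have hC0 : 0 < C := csP_integral_pos
  have hCc : (C : ℂ) ≠ 0 := by exact_mod_cast hC0.ne'
  have hVc : Continuous (csV A) := csV_continuous hA hM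
  have hWc : ∀ c, Continuous (csW A c) := fun c =>
    continuous_iff_continuousAt.2 fun z => (csW_hasFDerivAt hA c z).continuousAt
  set F : ℝ → ℂ → ℂ := fun c z => v z * Complex.exp ((C : ℂ)⁻¹ * csW A c z) with hF
  have hFd : ∀ c, ∀ z ∈ ball (0 : ℂ) ε, DifferentiableAt ℝ (F c) z ∧
      dbar (F c) z = v z * ((C : ℂ)⁻¹ * csD A c z - A z) *
        Complex.exp ((C : ℂ)⁻¹ * csW A c z) := by
    intro c z hz
    have hn : ball (0 : ℂ) ε ∈ 𝓝 z := isOpen_ball.mem_nhds hz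
    have h1 : HasFDerivAt v (fderiv ℝ v z) z :=
      ((hv.differentiableOn one_ne_zero).differentiableAt hn).hasFDerivAt
    have h2 := (csW_hasFDerivAt hA c z)
    have h3 := ((h2.const_mul ((C : ℂ)⁻¹))).cexp
    have h4 := h1.mul h3
    refine ⟨h4.differentiableAt, ?_⟩
    have e1 := hdv z hz
    have e2 := csW_dbar hA c z
    have e3 : fderiv ℝ (F c) z = _ := h4.fderiv
    rw [dbar] at e1 e2 ⊢
    rw [h2.fderiv] at e2
    rw [e3]
    simp only [add_apply, smul_apply, smul_eq_mul]
    linear_combination Complex.exp ((C : ℂ)⁻¹ * csW A c z) * e1 +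
      (v z * (C : ℂ)⁻¹ * Complex.exp ((C : ℂ)⁻¹ * csW A c z)) * e2
  refine ⟨ε, hε, le_rfl, fun z => Complex.exp (-((C : ℂ)⁻¹ * csV A z)),
    fun z => v z * Complex.exp ((C : ℂ)⁻¹ * csV A z), ?_, fun z _ => Complex.exp_ne_zero _, ?_, ?_⟩
  · exact Continuous.continuousOn (by fun_prop)
  · refine cs_morera ε _ F ?_ (fun c _ z hz => (hFd c z hz).1) ?_ ?_ ?_ ?_
    · exact hvc.mul (Continuous.continuousOn (by fun_prop))
    · intro c hc
      have hD := csD_continuous hA c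
      have hW := hWc c
      have hAv : ContinuousOn (fun z => v z * ((C : ℂ)⁻¹ * csD A c z) +
          - (C₁ z * v z + C₂ z * (starRingEnd ℂ) (v z))) (ball (0 : ℂ) ε) :=
        (hvc.mul (Continuous.continuousOn (by fun_prop))).add
          ((hC₁cont.mul hvc).add
            (hC₂cont.mul (Complex.continuous_conj.comp_continuousOn hvc))).neg
      have hexp : ContinuousOn (fun z => Complex.exp ((C : ℂ)⁻¹ * csW A c z)) (ball (0 : ℂ) ε) :=
        Continuous.continuousOn (by fun_prop)
      refine (hAv.mul hexp).congr fun z hz => ?_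
      rw [(hFd c z hz).2]
      simp only [Pi.mul_apply]
      linear_combination -(Complex.exp ((C : ℂ)⁻¹ * csW A c z)) * (hdv z hz) +
        (Complex.exp ((C : ℂ)⁻¹ * csW A c z)) * (heq z hz)
    · intro S hS hcpt
      obtain ⟨Bv, hBv⟩ := hcpt.exists_bound_of_continuousOn (hvc.mono hS)
      obtain ⟨BV, hBV⟩ := hcpt.exists_bound_of_continuousOn hVc.continuousOn
      set R := Real.exp (C⁻¹ * (BV + |(M₁ + M₂) * ∫ ζ, csE ζ|)) with hR
      set Q := C⁻¹ * ((M₁ + M₂) * C) + (M₁ + M₂) with hQ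
      refine ⟨max (Bv * R) (Bv * Q * R), fun c hc z hz => ?_⟩
      have hc0 : 0 < c := by linarith
      have hBv0 : 0 ≤ Bv := (norm_nonneg _).trans (hBv z hz)
      have hexp : ‖Complex.exp ((C : ℂ)⁻¹ * csW A c z)‖ ≤ R := by
        refine (Complex.norm_exp_le_exp_norm _).trans (Real.exp_le_exp.2 ?_)
        rw [norm_mul, norm_inv, Complex.norm_real, Real.norm_of_nonneg hC0.le]
        gcongr
        have h1 := cs_diff_le hA hM hc0 z
        have h2 : c⁻¹ * ((M₁ + M₂) * ∫ ζ, csE ζ) ≤ |(M₁ + M₂) * ∫ ζ, csE ζ| := by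
          calc _ ≤ c⁻¹ * |(M₁ + M₂) * ∫ ζ, csE ζ| := by gcongr; exact le_abs_self _
            _ ≤ _ := mul_le_of_le_one_left (abs_nonneg _) (inv_le_one_of_one_le₀ hc)
        have h3 : csW A c z = csV A z + (csW A c z - csV A z) := by ring
        rw [h3]
        exact (norm_add_le _ _).trans (add_le_add (hBV z hz) (h1.trans h2))
      constructor
      · refine le_trans ?_ (le_max_left _ _)
        rw [hF]
        simp only [norm_mul]
        exact mul_le_mul (hBv z hz) hexp (norm_nonneg _) hBv0
      · refine le_trans ?_ (le_max_right _ _)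
        rw [(hFd c z (hS hz)).2, norm_mul, norm_mul]
        have hq : ‖(C : ℂ)⁻¹ * csD A c z - A z‖ ≤ Q := by
          refine (norm_sub_le _ _).trans (add_le_add ?_ (hM z))
          rw [norm_mul, norm_inv, Complex.norm_real, Real.norm_of_nonneg hC0.le]
          gcongr
          exact csD_norm_le hM hc0 z
        have hQ0 : 0 ≤ Q := (norm_nonneg _).trans hq
        exact mul_le_mul (mul_le_mul (hBv z hz) hq (norm_nonneg _) hBv0) hexp (norm_nonneg _)
          (mul_nonneg hBv0 hQ0)
    · intro z hz
      have h1 := (cs_unif hA hM).tendsto_at z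
      exact ((Complex.continuous_exp.tendsto _).comp (h1.const_mul _)).const_mul _
    · intro z hz
      simp only [fun c => (hFd c z hz).2]
      by_cases hvz : v z = 0
      · simp [hvz]
      · have h1 := (cs_unif hA hM).tendsto_at z
        have h2 := csD_tendsto hA (hAc z hz hvz)
        have h3 := ((((h2.const_mul (C : ℂ)⁻¹).sub_const (A z)).const_mul (v z))).mul
          ((Complex.continuous_exp.tendsto _).comp (h1.const_mul (C : ℂ)⁻¹))
        refine h3.trans_eq ?_
        rw [← hC, Complex.real_smul, inv_mul_cancel_left₀ hCc]
        simp
  · intro z hz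
    rw [mul_left_comm, ← Complex.exp_add]
    simp
end

section
/- Let Ω ⊆ ℂ be a connected open set, let C₁, C₂ : Ω → ℂ be continuous, and let v : Ω → ℂ be continuously differentiable (over ℝ) with ∂̄v(z) + C₁(z)·v(z) + C₂(z)·conj(v(z)) = 0 for all z ∈ Ω. If v is not identically zero, then every zero of v is isolated: for every z₀ ∈ Ω with v(z₀) = 0 there is a punctured neighbourhood of z₀ in Ω on which v has no zeros. -/
open Complex Metric

open MeasureTheory Set Filter Topology
open scoped Convolution Interval

/-- The Cauchy kernel. -/
noncomputable def cker (z : ℂ) : ℂ := (Real.pi : ℂ)⁻¹ * z⁻¹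

lemma norm_cker (z : ℂ) : ‖cker z‖ = Real.pi⁻¹ * ‖z‖⁻¹ := by
  simp [cker, abs_of_pos Real.pi_pos]

lemma measurable_cker : Measurable cker := by
  unfold cker; fun_prop

lemma locallyIntegrable_cker : LocallyIntegrable cker volume := by
  refine locallyIntegrable_of_norm_le_rpow (C := Real.pi⁻¹) (α := 1) (by simp) (by simp) ?_
    measurable_cker.aestronglyMeasurable
  filter_upwards with z
  rw [norm_cker, Real.rpow_neg_one]

lemma pompeiu (G : ℂ → ℂ) (hG : ContDiff ℝ 1 G) (hc : HasCompactSupport G) :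
    ∫ z, cker z * dbar G z = - G 0 := by
  obtain ⟨R, hR0, hR⟩ : ∃ R : ℝ, 0 < R ∧ tsupport G ⊆ ball 0 R := by
    obtain ⟨R, hR⟩ := hc.isCompact.isBounded.subset_ball (0 : ℂ)
    exact ⟨max R 1, by positivity, hR.trans (ball_subset_ball (le_max_left _ _))⟩
  have hDc : Continuous (fderiv ℝ G) := hG.continuous_fderiv one_ne_zero
  have hDz : ∀ z : ℂ, R ≤ ‖z‖ → fderiv ℝ G z = 0 := by
    intro z hz
    by_contra h
    have := hR (support_fderiv_subset ℝ (f := G) h)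
    simp at this; linarith
  have hGz : ∀ z : ℂ, R ≤ ‖z‖ → G z = 0 := by
    intro z hz
    by_contra h
    have := hR (subset_tsupport G h)
    simp at this; linarith
  set E : ℝ → ℂ := fun θ => (Real.cos θ : ℂ) + (Real.sin θ : ℂ) * I with hE
  have hEc : Continuous E := by fun_prop
  have hEn : ∀ θ, ‖E θ‖ = 1 := by
    intro θ
    have : E θ = exp (θ * I) := by
      simp [hE, exp_mul_I]
    rw [this, norm_exp_ofReal_mul_I]
  set A : ℝ × ℝ → ℂ := fun p => fderiv ℝ G ((p.1 : ℂ) * E p.2) (E p.2) with hA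
  set B : ℝ × ℝ → ℂ := fun p => fderiv ℝ G ((p.1 : ℂ) * E p.2) (I * E p.2) with hB
  have hAc : Continuous A := by
    apply Continuous.clm_apply
    · exact hDc.comp (by fun_prop)
    · fun_prop
  have hBc : Continuous B := by
    apply Continuous.clm_apply
    · exact hDc.comp (by fun_prop)
    · fun_prop
  set S : Set (ℝ × ℝ) := Ioc 0 R ×ˢ Ioc (-Real.pi) Real.pi with hS
  have hint : ∀ F : ℝ × ℝ → ℂ, Continuous F → IntegrableOn F S := by
    intro F hF
    exact (hF.continuousOn.integrableOn_compact (isCompact_Icc.prod isCompact_Icc)).mono_set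
      (prod_mono Ioc_subset_Icc_self Ioc_subset_Icc_self)
  have e1 : ∫ z, cker z * dbar G z =
      ∫ p in polarCoord.target, (2 * Real.pi : ℂ)⁻¹ * (A p + I * B p) := by
    rw [← Complex.integral_comp_polarCoord_symm]
    apply setIntegral_congr_fun polarCoord.open_target.measurableSet
    intro p hp
    have hr : 0 < p.1 := hp.1
    have hr' : (p.1 : ℂ) ≠ 0 := by exact_mod_cast hr.ne'
    have hpi : (Real.pi : ℂ) ≠ 0 := by exact_mod_cast Real.pi_ne_zero
    have hEne : E p.2 ≠ 0 := by
      intro h; have := hEn p.2; rw [h] at this; simp at this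
    have hps : Complex.polarCoord.symm p = (p.1 : ℂ) * E p.2 := by
      rw [Complex.polarCoord_symm_apply]
    simp only [hps, hA, hB, dbar, cker]
    have hlin : ∀ L : ℂ →L[ℝ] ℂ, L (E p.2) + I * L (I * E p.2) = (E p.2)⁻¹ * (L 1 + I * L I) := by
      intro L
      have h1 : E p.2 = (Real.cos p.2) • (1:ℂ) + (Real.sin p.2) • I := by
        simp [hE]
      have h2 : I * E p.2 = (Real.cos p.2) • I - (Real.sin p.2) • (1:ℂ) := by
        simp only [hE, real_smul]; linear_combination (Real.sin p.2 : ℂ) * I_mul_I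
      have h3 : (E p.2)⁻¹ = (Real.cos p.2 : ℂ) - Real.sin p.2 * I := by
        rw [inv_eq_iff_eq_inv]
        apply eq_inv_of_mul_eq_one_left
        have := Real.sin_sq_add_cos_sq p.2
        have h4 : (Real.sin p.2 : ℂ)^2 + (Real.cos p.2 : ℂ)^2 = 1 := by exact_mod_cast this
        simp only [hE]
        linear_combination h4 - (Real.sin p.2 : ℂ)^2 * I_mul_I
      rw [h3, h2, h1]
      simp only [map_add, map_sub, ContinuousLinearMap.map_smul]
      simp only [real_smul]
      linear_combination (Real.sin p.2 : ℂ) * L I * I_mul_I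
    rw [hlin, real_smul]
    field_simp
  have e2 : ∫ p in polarCoord.target, (2 * Real.pi : ℂ)⁻¹ * (A p + I * B p) =
      ∫ p in S, (2 * Real.pi : ℂ)⁻¹ * (A p + I * B p) := by
    have : ∫ p in (Ioi (0:ℝ) ×ˢ Ioc (-Real.pi) Real.pi), (2 * Real.pi : ℂ)⁻¹ * (A p + I * B p) =
        ∫ p in S, (2 * Real.pi : ℂ)⁻¹ * (A p + I * B p) := by
      apply setIntegral_eq_of_subset_of_forall_sdiff_eq_zero
      · exact measurableSet_Ioi.prod measurableSet_Ioc
      · exact prod_mono Ioc_subset_Ioi_self le_rfl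
      · intro p hp
        have h0 : 0 < p.1 := hp.1.1
        have : R ≤ p.1 := by
          by_contra h
          exact hp.2 ⟨⟨h0, (not_le.1 h).le⟩, hp.1.2⟩
        have hz := hDz ((p.1 : ℂ) * E p.2) (by
          rw [norm_mul, hEn]; simpa [abs_of_pos h0] using this)
        simp [hA, hB, hz]
    rw [← this]
    apply setIntegral_congr_set
    rw [polarCoord_target]
    exact Measure.set_prod_ae_eq (ae_eq_refl _) Ioo_ae_eq_Ioc
  have eA : ∫ p in S, A p = - (2 * Real.pi) * G 0 := by
    have hi := hint A hAc
    rw [IntegrableOn, hS, Measure.volume_eq_prod, ← Measure.prod_restrict] at hi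
    rw [hS, Measure.volume_eq_prod, ← Measure.prod_restrict, integral_prod_symm _ hi]
    have h1 : ∀ θ : ℝ, ∫ r in Ioc 0 R, A (r, θ) = - G 0 := by
      intro θ
      rw [← intervalIntegral.integral_of_le hR0.le]
      have hd : ∀ r : ℝ, HasDerivAt (fun r : ℝ => G ((r : ℂ) * E θ)) (A (r, θ)) r := by
        intro r
        have h1 : HasDerivAt (fun r : ℝ => (r : ℂ) * E θ) (E θ) r := by
          simpa using ((hasDerivAt_id r).ofReal_comp).mul_const (E θ)
        exact ((hG.differentiable one_ne_zero) ((r:ℂ) * E θ)).hasFDerivAt.comp_hasDerivAt r h1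
      rw [intervalIntegral.integral_eq_sub_of_hasDerivAt
        (fun r _ => hd r) (Continuous.intervalIntegrable (by fun_prop) _ _)]
      rw [hGz ((R : ℂ) * E θ) (by rw [norm_mul, hEn]; simp [abs_of_pos hR0])]
      simp
    simp only [h1]
    rw [setIntegral_const, real_smul]
    simp [Real.pi_pos.le]
    left; ring
  have eB : ∫ p in S, B p = 0 := by
    rw [hS, Measure.volume_eq_prod, setIntegral_prod _ (hint B hBc)]
    apply setIntegral_eq_zero_of_forall_eq_zero
    intro r hr
    have hr0 : (r : ℂ) ≠ 0 := by exact_mod_cast hr.1.ne'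
    rw [← intervalIntegral.integral_of_le (by linarith [Real.pi_pos])]
    have hd : ∀ θ : ℝ, HasDerivAt (fun θ : ℝ => G ((r : ℂ) * E θ)) ((r:ℂ) * B (r, θ)) θ := by
      intro θ
      have h1 : HasDerivAt (fun θ : ℝ => (r : ℂ) * E θ) ((r : ℂ) * (I * E θ)) θ := by
        apply HasDerivAt.const_mul
        have hcos := (Real.hasDerivAt_cos θ).ofReal_comp
        have hsin := ((Real.hasDerivAt_sin θ).ofReal_comp).mul_const I
        convert! hcos.add hsin using 1
        simp only [hE]; push_cast; linear_combination (Complex.sin θ) * I_mul_I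
      have h2 := ((hG.differentiable one_ne_zero) ((r:ℂ) * E θ)).hasFDerivAt.comp_hasDerivAt θ h1
      convert! h2 using 1
      simp only [hB]
      rw [← real_smul, ← real_smul (x := r) (z := I * E θ), ContinuousLinearMap.map_smul]
    have := intervalIntegral.integral_eq_sub_of_hasDerivAt (a := -Real.pi) (b := Real.pi)
      (fun θ _ => hd θ) (Continuous.intervalIntegrable (by fun_prop) _ _)
    rw [intervalIntegral.integral_const_mul] at this
    have h0 : E (-Real.pi) = E Real.pi := by simp [hE]
    rw [h0, sub_self] at this
    exact (mul_eq_zero.1 this).resolve_left hr0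
  rw [e1, e2, integral_const_mul, integral_add (hint A hAc) ((hint B hBc).const_mul I), 
    integral_const_mul, eA, eB]
  have hpi : (Real.pi : ℂ) ≠ 0 := by exact_mod_cast Real.pi_ne_zero
  field_simp
  ring
/-- The Cauchy transform. -/
noncomputable def cauchyT (g : ℂ → ℂ) : ℂ → ℂ :=
  cker ⋆[ContinuousLinearMap.mul ℝ ℂ, volume] g

lemma cauchyT_apply (g : ℂ → ℂ) (w : ℂ) : cauchyT g w = ∫ t, cker t * g (w - t) := rfl

lemma contDiff_cauchyT (g : ℂ → ℂ) (hg : ContDiff ℝ 1 g) (hc : HasCompactSupport g) :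
    ContDiff ℝ 1 (cauchyT g) :=
  HasCompactSupport.contDiff_convolution_right (n := 1) _ hc locallyIntegrable_cker hg

lemma dbar_cauchyT (g : ℂ → ℂ) (hg : ContDiff ℝ 1 g) (hc : HasCompactSupport g) (w : ℂ) :
    dbar (cauchyT g) w = g w := by
  have h1 := HasCompactSupport.hasFDerivAt_convolution_right (ContinuousLinearMap.mul ℝ ℂ)
    hc locallyIntegrable_cker hg w
  have hDc : Continuous (fderiv ℝ g) := hg.continuous_fderiv one_ne_zero
  have h2 : ∀ x : ℂ, fderiv ℝ (cauchyT g) w x = ∫ t, cker t * fderiv ℝ g (w - t) x := by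
    intro x
    rw [cauchyT, h1.fderiv,
      convolution_precompR_apply _ locallyIntegrable_cker (hc.fderiv ℝ) hDc]
    rfl
  have h3 : ∀ x : ℂ, Integrable (fun t => cker t * fderiv ℝ g (w - t) x) := by
    intro x
    exact HasCompactSupport.convolutionExists_right (ContinuousLinearMap.mul ℝ ℂ)
      (hc.fderiv_apply ℝ x) locallyIntegrable_cker (by fun_prop) w
  set G : ℂ → ℂ := fun t => g (w - t) with hGdef
  have hG : ContDiff ℝ 1 G := hg.comp (by fun_prop)
  have hGc : HasCompactSupport G := hc.comp_homeomorph (Homeomorph.subLeft w)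
  have hP := pompeiu G hG hGc
  have hfd : ∀ t x, fderiv ℝ G t x = - fderiv ℝ g (w - t) x := by
    intro t x
    have : HasFDerivAt G ((fderiv ℝ g (w - t)).comp (-ContinuousLinearMap.id ℝ ℂ)) t :=
      HasFDerivAt.comp t ((hg.differentiable one_ne_zero) (w - t)).hasFDerivAt
        ((hasFDerivAt_id t).const_sub w)
    rw [this.fderiv]
    simp
  have hG0 : G 0 = g w := by simp [hGdef]
  rw [hG0] at hP
  have h4 : dbar (cauchyT g) w = - ∫ z, cker z * dbar G z := by
    simp only [dbar, h2, hfd]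
    rw [← integral_const_mul, ← integral_add (h3 1) ((h3 I).const_mul I), ← integral_const_mul,
      ← integral_neg]
    congr 1
    ext t
    ring
  rw [h4, hP, neg_neg]

lemma exists_rho (ε M : ℝ) (hε : 0 < ε) :
    ∃ ρ > 0, M * ∫ t in ball (0:ℂ) ρ, ‖cker t‖ ≤ ε := by
  have hi : ∀ r : ℝ, IntegrableOn (fun t => ‖cker t‖) (ball (0:ℂ) r) := fun r =>
    ((locallyIntegrable_cker.integrableOn_isCompact (isCompact_closedBall 0 r)).mono_set
      ball_subset_closedBall).norm
  have h := Antitone.tendsto_setIntegral (μ := volume) (f := fun t => ‖cker t‖)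
    (s := fun n : ℕ => ball (0:ℂ) (1 / ((n:ℝ) + 1)))
    (fun _ => measurableSet_ball)
    (fun m n h => ball_subset_ball (Nat.one_div_le_one_div h)) (hi _)
  have h0 : ∫ t in ⋂ n : ℕ, ball (0:ℂ) (1 / ((n:ℝ) + 1)), ‖cker t‖ = 0 := by
    apply setIntegral_eq_zero_of_forall_eq_zero
    intro t ht
    have : t = 0 := by
      by_contra hne
      obtain ⟨n, hn⟩ := exists_nat_one_div_lt (norm_pos_iff.2 hne)
      have := mem_iInter.1 ht n
      rw [mem_ball_zero_iff] at this
      linarith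
    simp [this, cker]
  rw [h0] at h
  have h' := h.const_mul M
  rw [mul_zero] at h'
  obtain ⟨n, hn⟩ := (h'.eventually (ge_mem_nhds hε)).exists
  exact ⟨_, by positivity, hn⟩

lemma cker_bound (h : ℂ → ℂ) (M ρ : ℝ) (hρ : 0 < ρ) (hM : ∀ z, ‖h z‖ ≤ M) (w t : ℂ) :
    ‖cker t * h (w - t)‖ ≤ (ball (0:ℂ) ρ).indicator (fun t => M * ‖cker t‖) t +
      ρ⁻¹ * ‖h (w - t)‖ := by
  rw [norm_mul]
  by_cases ht : t ∈ ball (0:ℂ) ρ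
  · rw [indicator_of_mem ht]
    have h1 : 0 ≤ ρ⁻¹ * ‖h (w - t)‖ := by positivity
    nlinarith [hM (w - t), norm_nonneg (cker t)]
  · rw [indicator_of_notMem ht, zero_add]
    have ht' : ρ ≤ ‖t‖ := by simpa using ht
    gcongr
    rw [norm_cker]
    have h1 : ‖t‖⁻¹ ≤ ρ⁻¹ := by gcongr
    have h2 : Real.pi⁻¹ ≤ 1 := inv_le_one_of_one_le₀ (by linarith [Real.pi_gt_three])
    calc Real.pi⁻¹ * ‖t‖⁻¹ ≤ 1 * ρ⁻¹ := by gcongr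
      _ = ρ⁻¹ := one_mul _

lemma integrable_bound (h : ℂ → ℂ) (M ρ : ℝ) (hi : Integrable h) (w : ℂ) :
    Integrable (fun t => (ball (0:ℂ) ρ).indicator (fun t => M * ‖cker t‖) t +
      ρ⁻¹ * ‖h (w - t)‖) := by
  apply Integrable.add
  · rw [integrable_indicator_iff measurableSet_ball]
    exact (((locallyIntegrable_cker.integrableOn_isCompact (isCompact_closedBall 0 ρ)).mono_set
      ball_subset_closedBall).norm).const_mul M
  · exact (hi.comp_sub_left w).norm.const_mul _

lemma integrable_cker_mul (h : ℂ → ℂ) (M : ℝ) (hi : Integrable h) (hM : ∀ z, ‖h z‖ ≤ M) (w : ℂ) :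
    Integrable (fun t => cker t * h (w - t)) := by
  refine (integrable_bound h M 1 hi w).mono' ?_
    (Eventually.of_forall fun t => cker_bound h M 1 one_pos hM w t)
  exact measurable_cker.aestronglyMeasurable.mul (hi.comp_sub_left w).aestronglyMeasurable

lemma norm_cauchyT_le (ε M : ℝ) (hε : 0 < ε) :
    ∃ δ > 0, ∀ h : ℂ → ℂ, Integrable h → (∀ z, ‖h z‖ ≤ M) → ∫ z, ‖h z‖ ≤ δ →
      ∀ w, ‖cauchyT h w‖ ≤ ε := by
  obtain ⟨ρ, hρ, hρ'⟩ := exists_rho (ε / 2) M (half_pos hε)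
  refine ⟨ρ * (ε / 2), by positivity, fun h hi hM hδ w => ?_⟩
  rw [cauchyT_apply]
  calc ‖∫ t, cker t * h (w - t)‖ ≤ ∫ t, ((ball (0:ℂ) ρ).indicator (fun t => M * ‖cker t‖) t +
      ρ⁻¹ * ‖h (w - t)‖) :=
        norm_integral_le_of_norm_le (integrable_bound h M ρ hi w)
          (Eventually.of_forall fun t => cker_bound h M ρ hρ hM w t)
    _ = M * (∫ t in ball (0:ℂ) ρ, ‖cker t‖) + ρ⁻¹ * ∫ t, ‖h t‖ := by
        rw [integral_add, integral_indicator measurableSet_ball, integral_const_mul,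
          integral_const_mul, integral_sub_left_eq_self (fun t => ‖h t‖)]
        · rw [integrable_indicator_iff measurableSet_ball]
          exact (((locallyIntegrable_cker.integrableOn_isCompact
            (isCompact_closedBall 0 ρ)).mono_set ball_subset_closedBall).norm).const_mul M
        · exact (hi.comp_sub_left w).norm.const_mul _
    _ ≤ ε / 2 + ρ⁻¹ * (ρ * (ε / 2)) := by gcongr
    _ = ε := by field_simp; ring

lemma cauchyT_sub (g h : ℂ → ℂ) (M : ℝ) (hg : Integrable g) (hh : Integrable h)
    (hgM : ∀ z, ‖g z‖ ≤ M) (hhM : ∀ z, ‖h z‖ ≤ M) (w : ℂ) :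
    cauchyT (fun z => g z - h z) w = cauchyT g w - cauchyT h w := by
  simp only [cauchyT_apply]
  rw [← integral_sub (integrable_cker_mul g M hg hgM w) (integrable_cker_mul h M hh hhM w)]
  simp only [mul_sub]

lemma mollify (a : ℂ → ℂ) (M R : ℝ) (ham : AEStronglyMeasurable a volume) (haM : ∀ z, ‖a z‖ ≤ M)
    (haR : ∀ z, z ∉ closedBall (0:ℂ) R → a z = 0) :
    Integrable a ∧ ∃ g : ℕ → ℂ → ℂ, (∀ n, ContDiff ℝ 1 (g n)) ∧ (∀ n, HasCompactSupport (g n)) ∧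
      (∀ n z, ‖g n z‖ ≤ M) ∧ Tendsto (fun n => ∫ z, ‖g n z - a z‖) atTop (𝓝 0) := by
  have hM0 : 0 ≤ M := (norm_nonneg _).trans (haM 0)
  have hai : Integrable a := by
    rw [← integrableOn_iff_integrable_of_support_subset (s := closedBall (0:ℂ) R)]
    · exact Measure.integrableOn_of_bounded (M := M) (measure_closedBall_lt_top).ne ham
        (Eventually.of_forall haM)
    · intro z hz
      by_contra h
      exact hz (haR z h)
  refine ⟨hai, ?_⟩
  let φ : ℕ → ContDiffBump (0 : ℂ) := fun n =>
    ⟨1 / ((n:ℝ) + 1), 2 * (1 / ((n:ℝ) + 1)), by positivity, by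
      have : 0 < 1 / ((n:ℝ) + 1) := by positivity
      linarith⟩
  let g : ℕ → ℂ → ℂ := fun n => (φ n).normed volume ⋆[ContinuousLinearMap.lsmul ℝ ℝ, volume] a
  have hgap : ∀ n z, g n z = ∫ t, (φ n).normed volume t • a (z - t) := fun n z => rfl
  have hg1 : ∀ n, ContDiff ℝ 1 (g n) := fun n =>
    HasCompactSupport.contDiff_convolution_left (n := 1) _ (φ n).hasCompactSupport_normed
      (φ n).contDiff_normed hai.locallyIntegrable
  have hgM : ∀ n z, ‖g n z‖ ≤ M := by
    intro n z
    rw [hgap]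
    calc ‖∫ t, (φ n).normed volume t • a (z - t)‖ ≤ ∫ t, (φ n).normed volume t * M := by
          apply norm_integral_le_of_norm_le
          · exact (φ n).integrable_normed.mul_const M
          · filter_upwards with t
            rw [norm_smul, Real.norm_of_nonneg ((φ n).nonneg_normed t)]
            exact mul_le_mul_of_nonneg_left (haM _) ((φ n).nonneg_normed t)
      _ = M := by rw [integral_mul_const, (φ n).integral_normed, one_mul]
  have hrout : ∀ n, (φ n).rOut ≤ 2 := by
    intro n
    have : 1 / ((n:ℝ) + 1) ≤ 1 := by
      rw [div_le_one (by positivity)]; linarith [(Nat.cast_nonneg n : (0:ℝ) ≤ n)]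
    change 2 * (1 / ((n:ℝ) + 1)) ≤ 2
    linarith
  have hg0 : ∀ n z, z ∉ closedBall (0:ℂ) (R + 2) → g n z = 0 := by
    intro n z hz
    rw [hgap]
    apply integral_eq_zero_of_ae
    filter_upwards with t
    by_cases ht : t ∈ ball (0:ℂ) (φ n).rOut
    · rw [haR, smul_zero]; · rfl
      intro h
      apply hz
      simp only [mem_ball_zero_iff, mem_closedBall_zero_iff] at *
      have := norm_add_le (z - t) t
      rw [sub_add_cancel] at this
      linarith [hrout n]
    · rw [← (φ n).support_normed_eq (μ := volume), Function.notMem_support] at ht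
      simp [ht]
  have hgc : ∀ n, HasCompactSupport (g n) := fun n =>
    HasCompactSupport.intro (isCompact_closedBall (0:ℂ) (R + 2)) (hg0 n)
  refine ⟨g, hg1, hgc, hgM, ?_⟩
  have hae : ∀ᵐ z, Tendsto (fun n => g n z) atTop (𝓝 (a z)) := by
    apply ContDiffBump.ae_convolution_tendsto_right_of_locallyIntegrable (K := 2)
    · have := (tendsto_one_div_add_atTop_nhds_zero_nat (𝕜 := ℝ)).const_mul 2
      rw [mul_zero] at this
      exact this
    · exact Eventually.of_forall fun n => le_rfl
    · exact hai.locallyIntegrable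
  have := tendsto_integral_of_dominated_convergence (μ := volume)
    (F := fun n z => ‖g n z - a z‖) (f := fun _ => 0)
    ((closedBall (0:ℂ) (R + 2)).indicator (fun _ => 2 * M))
    (fun n => ((hg1 n).continuous.aestronglyMeasurable.sub ham).norm)
    (by
      rw [integrable_indicator_iff measurableSet_closedBall]
      exact integrableOn_const (measure_closedBall_lt_top).ne)
    (by
      intro n
      filter_upwards with z
      by_cases hz : z ∈ closedBall (0:ℂ) (R + 2)
      · rw [indicator_of_mem hz, norm_norm]
        linarith [norm_sub_le (g n z) (a z), hgM n z, haM z]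
      · rw [indicator_of_notMem hz, hg0 n z hz, haR z]
        · simp
        · intro h
          exact hz (closedBall_subset_closedBall (by linarith) h))
    (by
      filter_upwards [hae] with z hz
      simpa using (hz.sub_const (a z)).norm)
  simpa using this
lemma rect_bound (F : ℂ → ℂ) (h : ℂ → ℝ) (z w : ℂ)
    (hF : IntegrableOn F ([[z.re, w.re]] ×ℂ [[z.im, w.im]]))
    (hh : Integrable h) (hh0 : ∀ x, 0 ≤ h x)
    (hle : ∀ x ∈ [[z.re, w.re]] ×ℂ [[z.im, w.im]], ‖F x‖ ≤ h x) :
    ‖∫ x : ℝ in z.re..w.re, ∫ y : ℝ in z.im..w.im, F (x + y * I)‖ ≤ ∫ x, h x := by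
  set e := measurableEquivRealProd.symm with he
  have hmp : MeasurePreserving e := volume_preserving_equiv_real_prod.symm
  have hexy : ∀ x y : ℝ, (x : ℂ) + y * I = e (x, y) := by
    intro x y
    rw [he, measurableEquivRealProd_symm_apply, mk_eq_add_mul_I]
  have hmem : ∀ x y : ℝ, x ∈ Ι z.re w.re → y ∈ Ι z.im w.im →
      (x : ℂ) + y * I ∈ [[z.re, w.re]] ×ℂ [[z.im, w.im]] := by
    intro x y hx hy
    rw [mem_reProdIm]
    simpa using ⟨uIoc_subset_uIcc hx, uIoc_subset_uIcc hy⟩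
  set S : Set (ℝ × ℝ) := Ι z.re w.re ×ˢ Ι z.im w.im with hS
  have hSm : MeasurableSet S := measurableSet_uIoc.prod measurableSet_uIoc
  have hFi : IntegrableOn (fun p => F (e p)) S := by
    have h1 := (hmp.integrableOn_comp_preimage e.measurableEmbedding (f := F)).2 hF
    refine h1.mono_set ?_
    rintro ⟨x, y⟩ hp
    rw [mem_preimage, ← hexy]
    exact hmem x y hp.1 hp.2
  have hhi : Integrable (fun p => h (e p)) :=
    (hmp.integrable_comp_emb e.measurableEmbedding).2 hh
  calc ‖∫ x : ℝ in z.re..w.re, ∫ y : ℝ in z.im..w.im, F (x + y * I)‖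
      = ‖∫ x in Ι z.re w.re, ∫ y : ℝ in z.im..w.im, F (x + y * I)‖ :=
        intervalIntegral.norm_integral_eq_norm_integral_uIoc _
    _ = ‖∫ x in Ι z.re w.re, ∫ y in Ι z.im w.im, F (x + y * I)‖ := by
        rcases le_total z.im w.im with hzw | hzw
        · simp only [intervalIntegral.integral_of_le hzw, uIoc_of_le hzw]
        · simp only [intervalIntegral.integral_of_ge hzw, uIoc_of_ge hzw, integral_neg, norm_neg]
    _ = ‖∫ p in S, F (e p)‖ := by
        rw [hS, Measure.volume_eq_prod, setIntegral_prod _ hFi]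
        simp only [hexy]
    _ ≤ ∫ p in S, h (e p) := by
        apply norm_integral_le_of_norm_le hhi.integrableOn
        filter_upwards [ae_restrict_mem hSm] with p hp
        have := hle _ (hmem p.1 p.2 hp.1 hp.2)
        rwa [hexy] at this
    _ ≤ ∫ p, h (e p) := setIntegral_le_integral hhi (Eventually.of_forall fun p => hh0 _)
    _ = ∫ x, h x := hmp.integral_comp e.measurableEmbedding h

lemma similarity (c : ℂ) (r : ℝ) (v a : ℂ → ℂ) (M R : ℝ)
    (hv : ContDiffOn ℝ 1 v (ball c r))
    (ham : AEStronglyMeasurable a volume) (haM : ∀ z, ‖a z‖ ≤ M)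
    (haR : ∀ z, z ∉ closedBall (0:ℂ) R → a z = 0)
    (heq : ∀ z ∈ ball c r, dbar v z = - a z * v z) :
    ∃ φ : ℂ → ℂ, DifferentiableOn ℂ (fun z => v z * exp (φ z)) (ball c r) := by
  obtain ⟨hai, g, hg1, hgc, hgM, hgt⟩ := mollify a M R ham haM haR
  have hgi : ∀ n, Integrable (g n) := fun n =>
    (hg1 n).continuous.integrable_of_hasCompactSupport (hgc n)
  set φ := cauchyT a with hφ
  set ψ : ℕ → ℂ → ℂ := fun n => cauchyT (g n) with hψ
  have hψ1 : ∀ n, ContDiff ℝ 1 (ψ n) := fun n => contDiff_cauchyT (g n) (hg1 n) (hgc n)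
  have hunif : TendstoUniformly ψ φ atTop := by
    rw [Metric.tendstoUniformly_iff]
    intro ε hε
    obtain ⟨δ, hδ, H⟩ := norm_cauchyT_le (ε / 2) (2 * M) (half_pos hε)
    filter_upwards [hgt.eventually (ge_mem_nhds hδ)] with n hn w
    have h1 := H (fun z => g n z - a z) ((hgi n).sub hai)
      (fun z => by linarith [norm_sub_le (g n z) (a z), hgM n z, haM z]) hn w
    rw [cauchyT_sub (g n) a M (hgi n) hai (hgM n) haM] at h1
    rw [dist_comm, dist_eq_norm]
    linarith
  have hφc : Continuous φ := hunif.continuous (Frequently.of_forall fun n => (hψ1 n).continuous)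
  refine ⟨φ, ?_⟩
  rw [← isConservativeOn_and_continuousOn_iff_isDifferentiableOn isOpen_ball]
  have huc : ContinuousOn (fun z => v z * exp (φ z)) (ball c r) :=
    hv.continuousOn.mul (by fun_prop)
  refine ⟨?_, huc⟩
  intro z w hzw
  rw [← add_eq_zero_iff_eq_neg, wedgeIntegral_add_wedgeIntegral_eq]
  set Q : Set ℂ := [[z.re, w.re]] ×ℂ [[z.im, w.im]] with hQ
  have hQsub : Q ⊆ ball c r := hzw
  have hQc : IsCompact Q := isCompact_uIcc.reProdIm isCompact_uIcc
  set u : ℕ → ℂ → ℂ := fun n z => v z * exp (ψ n z) with hu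
  have hu1 : ∀ n, ContDiffOn ℝ 1 (u n) (ball c r) := fun n =>
    hv.mul ((hψ1 n).cexp.contDiffOn)
  have hudbar : ∀ n, ∀ x ∈ ball c r, dbar (u n) x = (g n x - a x) * u n x := by
    intro n x hx
    have hvx : HasFDerivAt v (fderiv ℝ v x) x :=
      ((hv.contDiffAt (isOpen_ball.mem_nhds hx)).differentiableAt one_ne_zero).hasFDerivAt
    have hψx : HasFDerivAt (ψ n) (fderiv ℝ (ψ n) x) x :=
      ((hψ1 n).differentiable one_ne_zero x).hasFDerivAt
    have h1 := hvx.mul hψx.cexp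
    have h2 := heq x hx
    have h3 := dbar_cauchyT (g n) (hg1 n) (hgc n) x
    have h4 : fderiv ℝ (u n) x = _ := h1.fderiv
    rw [dbar] at h2 h3 ⊢
    rw [h4]
    simp only [add_apply, smul_apply, smul_eq_mul]
    simp only [hu]
    change (1 / 2) * (fderiv ℝ (ψ n) x 1 + I * fderiv ℝ (ψ n) x I) = g n x at h3
    linear_combination exp (ψ n x) * h2 + v x * exp (ψ n x) * h3
  obtain ⟨C, hC0, hC⟩ : ∃ C : ℝ, 0 ≤ C ∧ ∀ᶠ n in atTop, ∀ x ∈ Q, ‖u n x‖ ≤ C := by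
    obtain ⟨C1, hC1⟩ := hQc.exists_bound_of_continuousOn (hv.continuousOn.mono hQsub)
    obtain ⟨C2, hC2⟩ := hQc.exists_bound_of_continuousOn hφc.continuousOn
    refine ⟨max C1 0 * Real.exp (C2 + 1), by positivity, ?_⟩
    filter_upwards [(Metric.tendstoUniformly_iff.1 hunif) 1 one_pos] with n hn x hx
    rw [hu, norm_mul]
    gcongr
    · exact (hC1 x hx).trans (le_max_left _ _)
    · rw [norm_exp, Real.exp_le_exp]
      have h1 := hn x
      rw [dist_comm, dist_eq_norm] at h1
      have h2 := norm_add_le (ψ n x - φ x) (φ x)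
      rw [sub_add_cancel] at h2
      linarith [re_le_norm (ψ n x), hC2 x hx]
  have hpt : ∀ x, Tendsto (fun n => u n x) atTop (𝓝 (v x * exp (φ x))) := by
    intro x
    exact ((continuous_exp.tendsto _).comp (hunif.tendsto_at x)).const_mul (v x)
  have hQ1 : ∀ x y : ℝ, x ∈ [[z.re, w.re]] → y ∈ [[z.im, w.im]] → (x : ℂ) + y * I ∈ Q := by
    intro x y hx hy
    rw [hQ, mem_reProdIm]
    simpa using ⟨hx, hy⟩
  -- convergence of integrals along segments contained in the rectangle
  have hseg : ∀ (γ : ℝ → ℂ) (s t : ℝ), Continuous γ → (∀ x ∈ [[s, t]], γ x ∈ Q) →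
      Tendsto (fun n => ∫ x in s..t, u n (γ x)) atTop
        (𝓝 (∫ x in s..t, v (γ x) * exp (φ (γ x)))) := by
    intro γ s t hγ hγQ
    apply intervalIntegral.tendsto_integral_filter_of_dominated_convergence (fun _ => C)
    · filter_upwards with n
      apply ContinuousOn.aestronglyMeasurable _ measurableSet_uIoc
      exact ((hu1 n).continuousOn.comp hγ.continuousOn
        (fun x hx => hQsub (hγQ x (uIoc_subset_uIcc hx))))
    · filter_upwards [hC] with n hn
      filter_upwards with x hx
      exact hn _ (hγQ x (uIoc_subset_uIcc hx))
    · exact intervalIntegrable_const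
    · filter_upwards with x _
      exact hpt _
  have hlim := (((hseg (fun x => (x : ℂ) + z.im * I) z.re w.re (by fun_prop)
      (fun x hx => hQ1 x z.im hx left_mem_uIcc)).sub
    (hseg (fun x => (x : ℂ) + w.im * I) z.re w.re (by fun_prop)
      (fun x hx => hQ1 x w.im hx right_mem_uIcc))).add
    ((hseg (fun y => (w.re : ℂ) + y * I) z.im w.im (by fun_prop)
      (fun y hy => hQ1 w.re y right_mem_uIcc hy)).const_smul I)).sub
    ((hseg (fun y => (z.re : ℂ) + y * I) z.im w.im (by fun_prop)
      (fun y hy => hQ1 z.re y left_mem_uIcc hy)).const_smul I)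
  refine tendsto_nhds_unique hlim ?_
  have hdc : ∀ n, ContinuousOn (fun x => I • fderiv ℝ (u n) x 1 - fderiv ℝ (u n) x I) Q := by
    intro n
    have h1 : ContinuousOn (fderiv ℝ (u n)) Q :=
      ((hu1 n).continuousOn_fderiv_of_isOpen isOpen_ball le_rfl).mono hQsub
    fun_prop
  have hzero : Tendsto (fun n => 2 * C * ∫ x, ‖g n x - a x‖) atTop (𝓝 0) := by
    simpa using hgt.const_mul (2 * C)
  refine squeeze_zero_norm' ?_ hzero
  filter_upwards [hC] with n hn
  have hdiff : DifferentiableOn ℝ (u n) Q :=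
    ((hu1 n).differentiableOn one_ne_zero).mono hQsub
  have hint : IntegrableOn (fun x => I • fderiv ℝ (u n) x 1 - fderiv ℝ (u n) x I) Q :=
    (hdc n).integrableOn_compact hQc
  rw [integral_boundary_rect_of_differentiableOn_real (u n) z w hdiff hint, ← integral_const_mul]
  refine rect_bound (fun x => I • fderiv ℝ (u n) x 1 - fderiv ℝ (u n) x I) _ z w hint
    (((hgi n).sub hai).norm.const_mul _) (fun x => by positivity) ?_
  intro x hx
  have h1 : I • fderiv ℝ (u n) x 1 - fderiv ℝ (u n) x I = 2 * I * dbar (u n) x := by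
    rw [dbar, smul_eq_mul]
    linear_combination (-fderiv ℝ (u n) x I) * I_mul_I
  rw [h1, hudbar n x (hQsub hx), norm_mul, norm_mul, norm_mul]
  simp only [norm_I, Complex.norm_ofNat, mul_one]
  have := mul_le_mul_of_nonneg_left (hn x hx) (norm_nonneg (g n x - a x))
  linarith

lemma local_dichotomy (Ω : Set ℂ) (hΩ : IsOpen Ω) (C₁ C₂ : ℂ → ℂ)
    (hC₁ : ContinuousOn C₁ Ω) (hC₂ : ContinuousOn C₂ Ω)
    (v : ℂ → ℂ) (hv : ContDiffOn ℝ 1 v Ω)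
    (heq : ∀ z ∈ Ω, dbar v z + C₁ z * v z + C₂ z * (starRingEnd ℂ) (v z) = 0)
    (z₀ : ℂ) (hz₀ : z₀ ∈ Ω) :
    (∀ᶠ z in 𝓝 z₀, v z = 0) ∨ (∀ᶠ z in 𝓝[≠] z₀, v z ≠ 0) := by
  obtain ⟨r, hr, hrΩ⟩ := Metric.nhds_basis_closedBall.mem_iff.1 (hΩ.mem_nhds hz₀)
  set B := closedBall z₀ r with hB
  obtain ⟨M1, hM1⟩ := (isCompact_closedBall z₀ r).exists_bound_of_continuousOn (hC₁.mono hrΩ)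
  obtain ⟨M2, hM2⟩ := (isCompact_closedBall z₀ r).exists_bound_of_continuousOn (hC₂.mono hrΩ)
  have hM1' : 0 ≤ M1 := (norm_nonneg _).trans (hM1 z₀ (mem_closedBall_self hr.le))
  have hM2' : 0 ≤ M2 := (norm_nonneg _).trans (hM2 z₀ (mem_closedBall_self hr.le))
  set a : ℂ → ℂ := B.indicator (fun z => C₁ z + C₂ z * ((starRingEnd ℂ) (v z) / v z)) with ha
  have hBm : MeasurableSet B := measurableSet_closedBall
  obtain ⟨φ, hφ⟩ := similarity z₀ r v a (M1 + M2) (‖z₀‖ + r)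
    (hv.mono (ball_subset_closedBall.trans hrΩ))
    (by
      rw [ha, aestronglyMeasurable_indicator_iff hBm]
      have h1 := ((hC₁.mono hrΩ).aemeasurable (μ := volume) hBm)
      have h2 := ((hC₂.mono hrΩ).aemeasurable (μ := volume) hBm)
      have h3 := ((hv.continuousOn.mono hrΩ).aemeasurable (μ := volume) hBm)
      have h4 : AEMeasurable (fun z => (starRingEnd ℂ) (v z)) (volume.restrict B) :=
        continuous_conj.measurable.comp_aemeasurable h3
      exact (h1.add (h2.mul (h4.div h3))).aestronglyMeasurable)
    (by
      intro z
      by_cases hz : z ∈ B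
      · rw [ha, indicator_of_mem hz]
        refine (norm_add_le _ _).trans (add_le_add (hM1 z hz) ?_)
        rw [norm_mul, norm_div, RCLike.norm_conj]
        calc ‖C₂ z‖ * (‖v z‖ / ‖v z‖) ≤ M2 * 1 := by
              gcongr
              · exact hM2 z hz
              · exact div_self_le_one _
          _ = M2 := mul_one _
      · rw [ha, indicator_of_notMem hz, norm_zero]; positivity)
    (by
      intro z hz
      rw [ha, indicator_of_notMem]
      intro hzB
      apply hz
      rw [hB, mem_closedBall, dist_eq_norm] at hzB
      rw [mem_closedBall_zero_iff]
      have := norm_add_le (z - z₀) z₀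
      rw [sub_add_cancel] at this
      linarith)
    (by
      intro z hz
      have hzB : z ∈ B := ball_subset_closedBall hz
      have h := heq z (hrΩ hzB)
      rw [ha, indicator_of_mem hzB]
      by_cases hv0 : v z = 0
      · simp only [hv0, map_zero, mul_zero, add_zero] at h ⊢
        exact h
      · field_simp
        linear_combination h)
  have han : AnalyticAt ℂ (fun z => v z * exp (φ z)) z₀ :=
    hφ.analyticAt (ball_mem_nhds z₀ hr)
  rcases han.eventually_eq_zero_or_eventually_ne_zero with h | h
  · left
    filter_upwards [h] with z hz
    exact (mul_eq_zero.1 hz).resolve_right (exp_ne_zero _)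
  · right
    filter_upwards [h] with z hz
    exact left_ne_zero_of_mul hz

/-- for a solution of a Cauchy–Riemann type equation on a connected
open set which is not identically zero, every zero is isolated. -/
theorem zeros_isolated_of_CR_type_equation
    (Ω : Set ℂ) (hΩ : IsOpen Ω) (hconn : IsConnected Ω)
    (C₁ C₂ : ℂ → ℂ)
    (hC₁ : ContinuousOn C₁ Ω) (hC₂ : ContinuousOn C₂ Ω)
    (v : ℂ → ℂ) (hv : ContDiffOn ℝ 1 v Ω)
    (heq : ∀ z ∈ Ω, dbar v z + C₁ z * v z + C₂ z * (starRingEnd ℂ) (v z) = 0)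
    (hne : ∃ z ∈ Ω, v z ≠ 0) :
    ∀ z₀ ∈ Ω, v z₀ = 0 →
      ∃ r : ℝ, 0 < r ∧ ball z₀ r ⊆ Ω ∧
        ∀ z ∈ ball z₀ r, z ≠ z₀ → v z ≠ 0 := by
  have hdich := local_dichotomy Ω hΩ C₁ C₂ hC₁ hC₂ v hv heq
  intro z₀ hz₀ hv0
  rcases hdich z₀ hz₀ with h | h
  · exfalso
    set A : Set ℂ := {z | ∀ᶠ x in 𝓝 z, v x = 0} with hA
    have hAo : IsOpen A := isOpen_setOfPred_eventually_nhds
    have hsub : Ω ⊆ A := by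
      apply hconn.isPreconnected.subset_of_closure_inter_subset hAo ⟨z₀, hz₀, h⟩
      rintro z ⟨hzc, hzΩ⟩
      rcases hdich z hzΩ with h1 | h1
      · exact h1
      · rw [eventually_nhdsWithin_iff, _root_.eventually_nhds_iff] at h1
        obtain ⟨t, ht, hto, hzt⟩ := h1
        obtain ⟨y, hyt, hyA⟩ := mem_closure_iff.1 hzc t hto hzt
        have hyA' : ∀ᶠ x in 𝓝 y, v x = 0 := hyA
        have hyv : v y = 0 := hyA'.self_of_nhds
        by_cases hyz : y = z
        · rw [← hyz]; exact hyA
        · exact absurd hyv (ht y hyt hyz)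
    obtain ⟨z, hz, hvz⟩ := hne
    have hzA : ∀ᶠ x in 𝓝 z, v x = 0 := hsub hz
    exact hvz hzA.self_of_nhds
  · rw [eventually_nhdsWithin_iff] at h
    obtain ⟨r, hr, H⟩ := Metric.mem_nhds_iff.1 (Filter.inter_mem h (hΩ.mem_nhds hz₀))
    exact ⟨r, hr, fun z hz => (H hz).2, fun z hz hzz => (H hz).1 hzz⟩
end

section
/- Let Ω ⊆ ℂ be a connected open set, let C₁, C₂ : Ω → ℂ be continuous, and let v : Ω → ℂ be continuously differentiable (over ℝ) with ∂̄v(z) + C₁(z)·v(z) + C₂(z)·conj(v(z)) = 0 for all z ∈ Ω. If v vanishes identically on some nonempty open subset of Ω, then v vanishes identically on Ω. -/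
open Complex Metric

open Set Filter Topology

lemma hasDerivAt_ray (z : ℂ) (t r : ℝ) :
    HasDerivAt (fun s : ℝ => z + (s : ℂ) * exp ((t : ℂ) * I)) (exp ((t : ℂ) * I)) r := by
  simpa using ((Complex.ofRealCLM.hasDerivAt (x := r)).mul_const (exp ((t : ℂ) * I))).const_add z

lemma hasDerivAt_expI (t : ℝ) :
    HasDerivAt (fun s : ℝ => exp ((s : ℂ) * I)) (I * exp ((t : ℂ) * I)) t := by
  have h := ((Complex.ofRealCLM.hasDerivAt (x := t)).mul_const I).cexp
  simpa [mul_comm] using h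

lemma exp_two_pi : exp (((2 * Real.pi : ℝ) : ℂ) * I) = 1 := by
  push_cast
  exact Complex.exp_two_pi_mul_I

lemma cr_identity (T : ℂ →L[ℝ] ℂ) (w : ℂ) :
    T w = (starRingEnd ℂ) w * (T 1 + I * T I) - I * T (I * w) := by
  have h1 : w = w.re • (1 : ℂ) + w.im • I := by
    simp
  have h2 : I * w = w.re • I - w.im • (1 : ℂ) := by
    apply Complex.ext <;> simp
  have h3 : (starRingEnd ℂ) w = w.re - w.im * I := by
    apply Complex.ext <;> simp
  rw [h2, h3]
  conv_lhs => rw [h1]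
  simp only [map_add, map_sub, map_smul]
  simp only [Complex.real_smul]
  ring_nf
  simp only [I_sq]
  ring

/-- The sup-norm estimate for compactly supported functions. -/
lemma sup_estimate (u : ℂ → ℂ) (hu : ContDiff ℝ 1 u) (a : ℂ) (R : ℝ) (hR : 0 < R)
    (hsupp : ∀ z, R ≤ dist z a → u z = 0) (N : ℝ) (hN : ∀ z, ‖dbar u z‖ ≤ N) (z : ℂ) :
    ‖u z‖ ≤ 4 * R * N := by
  have hN0 : 0 ≤ N := (norm_nonneg _).trans (hN 0)
  by_cases hz : R ≤ dist z a
  · rw [hsupp z hz]; simp; positivity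
  push Not at hz
  have hcs : HasCompactSupport u := by
    refine HasCompactSupport.intro (isCompact_closedBall a R) fun x hx => hsupp x ?_
    simp only [mem_closedBall, not_le] at hx
    exact hx.le
  have hcont : Continuous (fderiv ℝ u) := hu.continuous_fderiv one_ne_zero
  obtain ⟨K, hK⟩ := hcont.bounded_above_of_compact_support (hcs.fderiv (𝕜 := ℝ))
  have hd : ∀ x, HasFDerivAt u (fderiv ℝ u x) x :=
    fun x => (hu.differentiable one_ne_zero x).hasFDerivAt
  have hnorm : ∀ t : ℝ, ‖exp ((t : ℂ) * I)‖ = 1 := Complex.norm_exp_ofReal_mul_I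
  set A : ℝ → ℂ := fun r => ∫ t in (0 : ℝ)..(2 * Real.pi), u (z + (r : ℂ) * exp ((t : ℂ) * I))
    with hA
  set A' : ℝ → ℂ := fun r => ∫ t in (0 : ℝ)..(2 * Real.pi),
    fderiv ℝ u (z + (r : ℂ) * exp ((t : ℂ) * I)) (exp ((t : ℂ) * I)) with hA'
  have hucont := hu.continuous
  have hderiv : ∀ r, HasDerivAt A (A' r) r := by
    intro r
    refine (intervalIntegral.hasDerivAt_integral_of_dominated_loc_of_deriv_le
      (𝕜 := ℝ) (F := fun (r : ℝ) (t : ℝ) => u (z + (r : ℂ) * exp ((t : ℂ) * I)))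
      (F' := fun (r : ℝ) (t : ℝ) =>
        fderiv ℝ u (z + (r : ℂ) * exp ((t : ℂ) * I)) (exp ((t : ℂ) * I)))
      (bound := fun _ => K) (s := univ) univ_mem ?_ ?_ ?_ ?_ ?_ ?_).2
    · refine Eventually.of_forall fun x => Continuous.aestronglyMeasurable ?_
      fun_prop
    · apply Continuous.intervalIntegrable
      fun_prop
    · apply Continuous.aestronglyMeasurable
      fun_prop
    · refine Eventually.of_forall fun t _ x _ => ?_
      refine (ContinuousLinearMap.le_opNorm _ _).trans ?_
      rw [hnorm, mul_one]
      exact hK _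
    · exact intervalIntegrable_const
    · refine Eventually.of_forall fun t _ x _ => ?_
      exact (hd _).comp_hasDerivAt x (hasDerivAt_ray z t x)
  have hzero : ∀ r : ℝ, ∫ t in (0 : ℝ)..(2 * Real.pi),
      fderiv ℝ u (z + (r : ℂ) * exp ((t : ℂ) * I)) (I * exp ((t : ℂ) * I)) = 0 := by
    intro r
    rcases eq_or_ne r 0 with rfl | hr
    · have := intervalIntegral.integral_eq_sub_of_hasDerivAt (a := 0) (b := 2 * Real.pi)
        (f := fun t : ℝ => fderiv ℝ u z (exp ((t : ℂ) * I)))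
        (f' := fun t : ℝ => fderiv ℝ u z (I * exp ((t : ℂ) * I)))
        (fun t _ => (fderiv ℝ u z).hasFDerivAt.comp_hasDerivAt t (hasDerivAt_expI t))
        (by apply Continuous.intervalIntegrable; fun_prop)
      rw [exp_two_pi] at this
      simpa using this
    · have := intervalIntegral.integral_eq_sub_of_hasDerivAt (a := 0) (b := 2 * Real.pi)
        (f := fun t : ℝ => u (z + (r : ℂ) * exp ((t : ℂ) * I)))
        (f' := fun t : ℝ => r • fderiv ℝ u (z + (r : ℂ) * exp ((t : ℂ) * I))
          (I * exp ((t : ℂ) * I)))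
        (fun t _ => by
          rw [← map_smul, Complex.real_smul]
          exact (hd _).comp_hasDerivAt t
            (((hasDerivAt_expI t).const_mul (r : ℂ)).const_add z))
        (by apply Continuous.intervalIntegrable; fun_prop)
      rw [exp_two_pi] at this
      rw [intervalIntegral.integral_smul] at this
      simp only [Complex.ofReal_zero, zero_mul, Complex.exp_zero, sub_self, smul_eq_zero, hr,
        false_or] at this
      exact this
  have hbound : ∀ r, ‖A' r‖ ≤ 4 * Real.pi * N := by
    intro r
    have h1 : A' r = ∫ t in (0 : ℝ)..(2 * Real.pi), (starRingEnd ℂ) (exp ((t : ℂ) * I)) *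
        (2 * dbar u (z + (r : ℂ) * exp ((t : ℂ) * I))) := by
      have h2 : ∀ t : ℝ, (starRingEnd ℂ) (exp ((t : ℂ) * I)) *
          (2 * dbar u (z + (r : ℂ) * exp ((t : ℂ) * I))) =
          fderiv ℝ u (z + (r : ℂ) * exp ((t : ℂ) * I)) (exp ((t : ℂ) * I)) +
          I * fderiv ℝ u (z + (r : ℂ) * exp ((t : ℂ) * I)) (I * exp ((t : ℂ) * I)) := by
        intro t
        rw [cr_identity _ (exp ((t : ℂ) * I)), dbar]
        ring
      simp only [h2]
      rw [intervalIntegral.integral_add, intervalIntegral.integral_const_mul, hzero]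
      · simp [hA']
      · apply Continuous.intervalIntegrable
        fun_prop
      · apply Continuous.intervalIntegrable
        fun_prop
    rw [h1]
    refine (intervalIntegral.norm_integral_le_of_norm_le_const (C := 2 * N) fun t _ => ?_).trans ?_
    · rw [norm_mul, norm_mul, RCLike.norm_conj, hnorm]
      have := hN (z + (r : ℂ) * exp ((t : ℂ) * I))
      simp
      linarith
    · rw [sub_zero, abs_of_pos Real.two_pi_pos]
      linarith
  have hmv := norm_image_sub_le_of_norm_deriv_le_segment' (f := A) (f' := A') (a := 0) (b := 2 * R)
    (C := 4 * Real.pi * N) (fun x _ => (hderiv x).hasDerivWithinAt) (fun x _ => hbound x) (2 * R)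
    ⟨by positivity, le_rfl⟩
  have hA0 : A 0 = 2 * Real.pi * u z := by simp [hA]
  have hA1 : A (2 * R) = 0 := by
    have : ∀ t : ℝ, u (z + ((2 * R : ℝ) : ℂ) * exp ((t : ℂ) * I)) = 0 := by
      intro t
      apply hsupp
      have h1 : ‖((2 * R : ℝ) : ℂ) * exp ((t : ℂ) * I)‖ = 2 * R := by
        rw [norm_mul, hnorm, mul_one, Complex.norm_real, Real.norm_of_nonneg (by positivity)]
      have h2 : ‖((2 * R : ℝ) : ℂ) * exp ((t : ℂ) * I)‖ ≤
          ‖z + ((2 * R : ℝ) : ℂ) * exp ((t : ℂ) * I) - a‖ + ‖z - a‖ := by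
        have := norm_sub_le (z + ((2 * R : ℝ) : ℂ) * exp ((t : ℂ) * I) - a) (z - a)
        have h3 : z + ((2 * R : ℝ) : ℂ) * exp ((t : ℂ) * I) - a - (z - a) =
            ((2 * R : ℝ) : ℂ) * exp ((t : ℂ) * I) := by ring
        rwa [h3] at this
      rw [dist_eq_norm] at hz ⊢
      linarith
    simp only [hA, this, intervalIntegral.integral_zero]
  rw [hA0, hA1, zero_sub, norm_neg, norm_mul, norm_mul, Complex.norm_real,
    Real.norm_of_nonneg Real.pi_pos.le] at hmv
  simp only [RCLike.norm_ofNat, sub_zero] at hmv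
  have hpi := Real.pi_pos
  have : (2 * Real.pi) * ‖u z‖ ≤ (2 * Real.pi) * (4 * R * N) := by linarith
  exact le_of_mul_le_mul_left this (by positivity)

lemma dbar_congr {f g : ℂ → ℂ} {z : ℂ} (h : f =ᶠ[𝓝 z] g) : dbar f z = dbar g z := by
  rw [dbar, dbar, h.fderiv_eq]

lemma dbar_mul_holo {f g : ℂ → ℂ} {z : ℂ} (hf : DifferentiableAt ℝ f z)
    (hg : DifferentiableAt ℂ g z) : dbar (f * g) z = dbar f z * g z := by
  have hg' : HasFDerivAt g ((fderiv ℂ g z).restrictScalars ℝ) z :=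
    hg.hasFDerivAt.restrictScalars ℝ
  have h3 : fderiv ℂ g z I = I * fderiv ℂ g z 1 := by
    rw [← smul_eq_mul, ← map_smul]; simp
  rw [dbar, dbar, fderiv_mul hf hg'.differentiableAt, hg'.fderiv]
  simp [h3]
  ring_nf
  simp only [I_sq]
  ring

lemma local_vanish (v : ℂ → ℂ) (Ω : Set ℂ) (hΩ : IsOpen Ω) (hv : ContDiffOn ℝ 1 v Ω)
    (a : ℂ) (R : ℝ) (hR : 0 < R) (hsub : closedBall a R ⊆ Ω) (M : ℝ)
    (hM : ∀ z ∈ closedBall a R, ‖dbar v z‖ ≤ M * ‖v z‖) (hMR : 8 * R * M ≤ 1)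
    (ha : ∀ᶠ z in 𝓝 a, v z = 0) : ∀ z ∈ ball a (R / 2), v z = 0 := by
  let χ : ContDiffBump a := ⟨R / 2, R, by positivity, by linarith⟩
  set w : ℂ → ℂ := fun z => (χ z : ℂ) * v z with hw
  have hw0 : ∀ z, R ≤ dist z a → w z = 0 := fun z hz => by
    simp [hw, χ.zero_of_le_dist hz]
  have hwv : ∀ z ∈ ball a (R / 2), w z = v z := fun z hz => by
    simp [hw, χ.one_of_mem_closedBall (ball_subset_closedBall hz)]
  have hwa : ∀ᶠ z in 𝓝 a, w z = 0 := ha.mono fun z hz => by simp [hw, hz]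
  have hwC : ContDiff ℝ 1 w := by
    rw [contDiff_iff_contDiffAt]
    intro z
    by_cases hz : z ∈ closedBall a R
    · have h1 : ContDiffAt ℝ 1 v z := hv.contDiffAt (hΩ.mem_nhds (hsub hz))
      have h2 : ContDiff ℝ 1 (fun z => ((χ z : ℝ) : ℂ)) :=
        Complex.ofRealCLM.contDiff.comp χ.contDiff
      exact h2.contDiffAt.mul h1
    · have : w =ᶠ[𝓝 z] fun _ => 0 := by
        filter_upwards [isClosed_closedBall.isOpen_compl.mem_nhds hz] with y hy
        apply hw0
        simp only [mem_compl_iff, mem_closedBall, not_le] at hy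
        exact hy.le
      exact contDiffAt_const.congr_of_eventuallyEq this
  have hcs : HasCompactSupport w := by
    refine HasCompactSupport.intro (isCompact_closedBall a R) fun x hx => hw0 x ?_
    simp only [mem_closedBall, not_le] at hx
    exact hx.le
  have hcont : Continuous (fderiv ℝ w) := hwC.continuous_fderiv one_ne_zero
  obtain ⟨K, hK⟩ := hcont.bounded_above_of_compact_support (hcs.fderiv (𝕜 := ℝ))
  have hK0 : 0 ≤ K := (norm_nonneg _).trans (hK 0)
  have hwK : ∀ z, ‖dbar w z‖ ≤ K := by
    intro z
    have h1 := ((fderiv ℝ w z).le_opNorm 1)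
    have h2 := ((fderiv ℝ w z).le_opNorm I)
    have h3 := norm_add_le (fderiv ℝ w z 1) (I * fderiv ℝ w z I)
    have h4 := hK z
    simp only [norm_one, norm_I, mul_one, norm_mul, one_mul] at h1 h2 h3
    rw [dbar, norm_mul]
    simp only [one_div, norm_inv, RCLike.norm_ofNat]
    linarith
  have hwM : ∀ z ∈ ball a (R / 2), ‖dbar w z‖ ≤ M * ‖w z‖ := by
    intro z hz
    have : w =ᶠ[𝓝 z] v := by
      filter_upwards [isOpen_ball.mem_nhds hz] with y hy using hwv y hy
    rw [dbar_congr this, hwv z hz]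
    exact hM z (ball_subset_closedBall (ball_subset_ball (by linarith) hz))
  have hM' : 0 ≤ max M 0 := le_max_right _ _
  have hMR' : 8 * R * max M 0 ≤ 1 := by
    rcases max_cases M 0 with h | h <;> rw [h.1] <;> simp [hMR]
  have key : ∀ n : ℕ, ∀ z, z ≠ a → ‖w z‖ * (‖z - a‖⁻¹) ^ n ≤ 8 * R * (K * ((R / 2)⁻¹) ^ n) := by
    intro n
    set g : ℂ → ℂ := fun z => ((z - a)⁻¹) ^ n with hg
    have hgd : ∀ z, z ≠ a → DifferentiableAt ℂ g z := fun z hz => by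
      have : z - a ≠ 0 := sub_ne_zero.2 hz
      simp only [hg]
      fun_prop (disch := assumption)
    have hua : w * g =ᶠ[𝓝 a] fun _ => 0 := hwa.mono fun z hz => by simp [hz]
    have huC : ContDiff ℝ 1 (w * g) := by
      rw [contDiff_iff_contDiffAt]
      intro z
      rcases eq_or_ne z a with rfl | hz
      · exact contDiffAt_const.congr_of_eventuallyEq hua
      · have h1 : z - a ≠ 0 := sub_ne_zero.2 hz
        have : ContDiffAt ℝ 1 g z :=
          ((contDiffAt_id.sub contDiffAt_const).inv h1).pow n
        exact hwC.contDiffAt.mul this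
    have hgn : ∀ z, ‖g z‖ = (‖z - a‖⁻¹) ^ n := fun z => by simp [hg]
    have hu0 : ∀ z, R ≤ dist z a → (w * g) z = 0 := fun z hz => by simp [hw0 z hz]
    have hucs : HasCompactSupport (w * g) := hcs.mul_right
    obtain ⟨z₀, hz₀⟩ := huC.continuous.norm.exists_forall_ge_of_hasCompactSupport hucs.norm
    have hest := sup_estimate (w * g) huC a R hR hu0
      (max M 0 * ‖(w * g) z₀‖ + K * ((R / 2)⁻¹) ^ n) (by
        intro z
        have hp : 0 ≤ K * ((R / 2)⁻¹) ^ n := by positivity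
        have hp2 : 0 ≤ max M 0 * ‖(w * g) z₀‖ := by positivity
        rcases eq_or_ne z a with rfl | hz
        · rw [dbar_congr hua]
          simp [dbar]
          simpa using add_nonneg hp2 hp
        · rw [dbar_mul_holo (hwC.differentiable one_ne_zero z) (hgd z hz), norm_mul]
          by_cases hzb : z ∈ ball a (R / 2)
          · have h1 : ‖dbar w z‖ * ‖g z‖ ≤ max M 0 * ‖(w * g) z₀‖ := by
              calc ‖dbar w z‖ * ‖g z‖ ≤ (M * ‖w z‖) * ‖g z‖ := by
                    gcongr; exact hwM z hzb
                _ ≤ (max M 0 * ‖w z‖) * ‖g z‖ := by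
                    gcongr; exact le_max_left _ _
                _ = max M 0 * ‖(w * g) z‖ := by
                    rw [Pi.mul_apply, norm_mul (w z) (g z), mul_assoc]
                _ ≤ _ := by gcongr; exact hz₀ z
            linarith
          · have h1 : ‖dbar w z‖ * ‖g z‖ ≤ K * ((R / 2)⁻¹) ^ n := by
              rw [hgn]
              rw [mem_ball, dist_eq_norm, not_lt] at hzb
              gcongr
              exact hwK z
            linarith) z₀
    intro z hz
    have h1 := hz₀ z
    rw [Pi.mul_apply, norm_mul, hgn] at h1
    refine h1.trans ?_
    have h2 : 8 * R * max M 0 * ‖(w * g) z₀‖ ≤ 1 * ‖(w * g) z₀‖ := by gcongr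
    linarith
  intro z hz
  rcases eq_or_ne z a with rfl | hza
  · exact ha.self_of_nhds
  rw [← hwv z hz]
  have hpos : 0 < ‖z - a‖ := norm_pos_iff.2 (sub_ne_zero.2 hza)
  have hlim : Tendsto (fun n : ℕ => 8 * R * K * (‖z - a‖ / (R / 2)) ^ n) atTop (𝓝 0) := by
    have := (tendsto_pow_atTop_nhds_zero_of_lt_one (r := ‖z - a‖ / (R / 2)) (by positivity) (by
      rw [mem_ball, dist_eq_norm] at hz
      rw [div_lt_one (by positivity)]
      exact hz)).const_mul (8 * R * K)
    simpa using this
  have : ‖w z‖ ≤ 0 := by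
    refine ge_of_tendsto' hlim fun n => ?_
    have h1 := mul_le_mul_of_nonneg_right (key n z hza) (pow_nonneg hpos.le n)
    rw [mul_assoc, ← mul_pow, inv_mul_cancel₀ hpos.ne', one_pow, mul_one] at h1
    refine h1.trans (le_of_eq ?_)
    rw [div_eq_mul_inv ‖z - a‖, mul_pow]
    ring
  exact norm_le_zero_iff.1 this

/-- unique continuation for Cauchy–Riemann type equations: a solution
vanishing identically on a nonempty open subset of a connected open set vanishes
identically. -/
theorem unique_continuation_of_CR_type_equation
    (Ω : Set ℂ) (hΩ : IsOpen Ω) (hconn : IsConnected Ω)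
    (C₁ C₂ : ℂ → ℂ)
    (hC₁ : ContinuousOn C₁ Ω) (hC₂ : ContinuousOn C₂ Ω)
    (v : ℂ → ℂ) (hv : ContDiffOn ℝ 1 v Ω)
    (heq : ∀ z ∈ Ω, dbar v z + C₁ z * v z + C₂ z * (starRingEnd ℂ) (v z) = 0)
    (hvan : ∃ V : Set ℂ, IsOpen V ∧ V.Nonempty ∧ V ⊆ Ω ∧ ∀ z ∈ V, v z = 0) :
    ∀ z ∈ Ω, v z = 0 := by
  obtain ⟨V, hVo, hVne, hVΩ, hV⟩ := hvan
  have key : Ω ⊆ interior {z | v z = 0} := by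
    refine hconn.isPreconnected.subset_of_closure_inter_subset isOpen_interior ?_ ?_
    · obtain ⟨x, hx⟩ := hVne
      exact ⟨x, hVΩ hx, mem_interior.2 ⟨V, hV, hVo, hx⟩⟩
    · rintro b ⟨hb, hbΩ⟩
      obtain ⟨r, hr, hrΩ⟩ := Metric.nhds_basis_closedBall.mem_iff.1 (hΩ.mem_nhds hbΩ)
      obtain ⟨K₁, hK₁⟩ := (isCompact_closedBall b r).exists_bound_of_continuousOn (hC₁.mono hrΩ)
      obtain ⟨K₂, hK₂⟩ := (isCompact_closedBall b r).exists_bound_of_continuousOn (hC₂.mono hrΩ)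
      have hbb : b ∈ closedBall b r := mem_closedBall_self hr.le
      have hK₁0 : 0 ≤ K₁ := (norm_nonneg _).trans (hK₁ b hbb)
      have hK₂0 : 0 ≤ K₂ := (norm_nonneg _).trans (hK₂ b hbb)
      set M := K₁ + K₂ with hMdef
      have hM0 : 0 ≤ M := by positivity
      set R := min (r / 2) (1 / (8 * (M + 1))) with hRdef
      have hR : 0 < R := by positivity
      have hRr : R ≤ r / 2 := min_le_left _ _
      have hRM : R ≤ 1 / (8 * (M + 1)) := min_le_right _ _
      have hMR : 8 * R * M ≤ 1 := by
        rw [le_div_iff₀ (by positivity)] at hRM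
        nlinarith
      obtain ⟨a, haZ, hab⟩ := Metric.mem_closure_iff.1 hb (R / 2) (by positivity)
      have hsub : closedBall a R ⊆ closedBall b r := by
        apply closedBall_subset_closedBall'
        rw [dist_comm]
        linarith
      have hloc := local_vanish v Ω hΩ hv a R hR (hsub.trans hrΩ) M (by
        intro z hz
        have hz' := hsub hz
        have h := heq z (hrΩ hz')
        have h1 : dbar v z = -(C₁ z * v z + C₂ z * (starRingEnd ℂ) (v z)) := by
          linear_combination h
        rw [h1, norm_neg, hMdef, add_mul]
        refine (norm_add_le _ _).trans ?_
        rw [norm_mul, norm_mul, RCLike.norm_conj]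
        gcongr
        · exact hK₁ z hz'
        · exact hK₂ z hz') hMR (mem_interior_iff_mem_nhds.1 haZ)
      exact mem_interior.2 ⟨ball a (R / 2), hloc, isOpen_ball, by rwa [mem_ball]⟩
  intro z hz
  have h : z ∈ {z | v z = 0} := interior_subset (key hz)
  exact h
end
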